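/- For every integer r ≥ 2 and every mismatched pair {P, Q} of distinct r-patterns, asymptotically almost surely z_{{P,Q}}(RM_n^(r)) = Θ(n^(1/r)); that is, there exist constants c₁, c₂ > 0 (depending only on r, P, Q) such that the probability that c₁·n^(1/r) ≤ z_{{P,Q}}(RM_n^(r)) ≤ c₂·n^(1/r) tends to 1 as n → ∞. -/

import Mathlib

open Finset
open scoped Classical

/-- An ordered `r`-matching of size `n`: a partition of `[r*n] = {1,…,r*n}` into `n`
pairwise disjoint `r`-element subsets (the edges). -/
def IsOrderedMatching (r n : ℕ) (M : Finset (Finset ℕ)) : Prop :=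
  M.card = n ∧ (∀ e ∈ M, e.card = r) ∧
  (∀ e ∈ M, ∀ f ∈ M, e ≠ f → Disjoint e f) ∧
  M.biUnion id = Finset.Icc 1 (r * n)

/-- Two disjoint `r`-element sets `e`, `f` form the `r`-pattern `P`: the unique
order-preserving bijection from `e ∪ f` onto `[2r]` maps the pair `{e, f}` onto `P`. -/
def FormsPattern (r : ℕ) (e f : Finset ℕ) (P : Finset (Finset ℕ)) : Prop :=
  ∃ φ : ℕ → ℕ, StrictMonoOn φ ↑(e ∪ f) ∧
    (e ∪ f).image φ = Finset.Icc 1 (2 * r) ∧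
    ({e.image φ, f.image φ} : Finset (Finset ℕ)) = P

/-- A `Ps`-clique: a family of pairwise disjoint `r`-element subsets of `ℕ`, every two of
which form a pattern belonging to `Ps`. -/
def IsClique (r : ℕ) (Ps : Set (Finset (Finset ℕ))) (K : Finset (Finset ℕ)) : Prop :=
  (∀ e ∈ K, e.card = r) ∧ (∀ e ∈ K, ∀ f ∈ K, e ≠ f → Disjoint e f) ∧
  (∀ e ∈ K, ∀ f ∈ K, e ≠ f → ∃ P ∈ Ps, FormsPattern r e f P)

/-- `z_Ps(M)`: the maximum size of a subfamily of `M` that is a `Ps`-clique. -/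
noncomputable def zClique (r : ℕ) (Ps : Set (Finset (Finset ℕ))) (M : Finset (Finset ℕ)) : ℕ :=
  sSup {k | ∃ K : Finset (Finset ℕ), K ⊆ M ∧ IsClique r Ps K ∧ K.card = k}

/-- All ordered `r`-matchings of size `n` (as a finset). -/
noncomputable def matchingFamilies (r n : ℕ) : Finset (Finset (Finset ℕ)) :=
  ((Finset.Icc 1 (r * n)).powerset.powerset).filter (IsOrderedMatching r n)

/-- The probability of the event `A` for a uniformly random ordered `r`-matching of size `n`. -/
noncomputable def prob (r n : ℕ) (A : Finset (Finset ℕ) → Prop) : ℝ :=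
  (((matchingFamilies r n).filter A).card : ℝ) / ((matchingFamilies r n).card : ℝ)

/-- Expectation of `X` with respect to a uniformly random ordered `r`-matching of size `n`. -/
noncomputable def expect (r n : ℕ) (X : Finset (Finset ℕ) → ℝ) : ℝ :=
  (∑ M ∈ matchingFamilies r n, X M) / ((matchingFamilies r n).card : ℝ)

/-- An `r`-partite `r`-pattern: each edge contains exactly one of `{2i-1, 2i}` for each
`i = 1, …, r`. -/
def IsPartitePattern (r : ℕ) (P : Finset (Finset ℕ)) : Prop :=
  IsOrderedMatching r 2 P ∧
  ∀ e ∈ P, ∀ i ∈ Finset.Icc 1 r, (e ∩ {2 * i - 1, 2 * i}).card = 1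

/-- An `r`-pattern `P` is collectable if there exist arbitrarily large `{P}`-cliques. -/
def Collectable (r : ℕ) (P : Finset (Finset ℕ)) : Prop :=
  ∀ k : ℕ, ∃ K : Finset (Finset ℕ), IsClique r {P} K ∧ K.card = k

/-- The word of a pattern `P` over `{A=true, B=false}`: the `j`-th letter is `true` iff
vertex `j` lies in the edge of `P` containing `1`. -/
noncomputable def patternWord (r : ℕ) (P : Finset (Finset ℕ)) : List Bool :=
  (List.range (2 * r)).map (fun j => decide (∃ e ∈ P, 1 ∈ e ∧ j + 1 ∈ e))

/-- `lam` is a splitting of the word `w` into consecutive blocks of the form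
`A^t B^t` or `B^t A^t` with half-lengths given by `lam`. -/
def IsBlockSplitting (w : List Bool) (lam : List ℕ) : Prop :=
  (∀ t ∈ lam, 1 ≤ t) ∧
  ∃ bs : List Bool, bs.length = lam.length ∧
    w = (List.zipWith (fun t b => List.replicate t b ++ List.replicate t !b) lam bs).flatten

/-- The pattern `P` has composition `lam` (the sequence of half-lengths of the blocks of
its unique splitting). -/
def HasComposition (r : ℕ) (P : Finset (Finset ℕ)) (lam : List ℕ) : Prop :=
  IsBlockSplitting (patternWord r P) lam

/-- Two distinct collectable `r`-patterns are harmonious if they have the same composition. -/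
def Harmonious (r : ℕ) (P Q : Finset (Finset ℕ)) : Prop :=
  P ≠ Q ∧ Collectable r P ∧ Collectable r Q ∧
  ∃ lam : List ℕ, HasComposition r P lam ∧ HasComposition r Q lam

/-- A pair of distinct `r`-patterns is a mismatch if exactly one of them is collectable, or
both are collectable but their compositions differ. -/
def Mismatch (r : ℕ) (P Q : Finset (Finset ℕ)) : Prop :=
  P ≠ Q ∧
  ((Collectable r P ∧ ¬ Collectable r Q) ∨
   (¬ Collectable r P ∧ Collectable r Q) ∨
   (Collectable r P ∧ Collectable r Q ∧
     ¬ ∃ lam : List ℕ, HasComposition r P lam ∧ HasComposition r Q lam))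

/-- The trace of an ordered `r`-matching of size `k` on `[rk]`: the `j`-th letter equals
`i` when `j` is the `i`-th smallest element of the edge containing `j`. -/
noncomputable def trace (r k : ℕ) (M : Finset (Finset ℕ)) : List ℕ :=
  (List.range (r * k)).map (fun j₀ =>
    ((Finset.Icc 1 (r * k)).filter
      (fun x => x ≤ j₀ + 1 ∧ ∃ e ∈ M, j₀ + 1 ∈ e ∧ x ∈ e)).card)

/-- `a_Ps(k)`: the number of `Ps`-cliques of size `k` whose edges partition `[rk]`. -/
noncomputable def cliqueCount (r : ℕ) (Ps : Set (Finset (Finset ℕ))) (k : ℕ) : ℕ :=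
  (((Finset.Icc 1 (r * k)).powerset.powerset).filter
    (fun M => IsOrderedMatching r k M ∧ IsClique r Ps M)).card

/-- The maximum size of any `Ps`-clique whatsoever. -/
noncomputable def maxCliqueSize (r : ℕ) (Ps : Set (Finset (Finset ℕ))) : ℕ :=
  sSup {k | ∃ K : Finset (Finset ℕ), IsClique r Ps K ∧ K.card = k}

/-- `M` contains a copy of the ordered `r`-matching `H` of size `k`: a subfamily `N ⊆ M` of
`k` edges such that the order-preserving bijection from the union of the edges of `N`
onto `[rk]` maps `N` onto `H`. -/
def ContainsCopy (r k : ℕ) (H M : Finset (Finset ℕ)) : Prop :=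
  ∃ N ⊆ M, N.card = k ∧ ∃ φ : ℕ → ℕ,
    StrictMonoOn φ ↑(N.biUnion id) ∧
    (N.biUnion id).image φ = Finset.Icc 1 (r * k) ∧
    N.image (fun e => e.image φ) = H

/-- Delete the `j`-th smallest element of the finite set `e`. -/
def deleteJth (j : ℕ) (e : Finset ℕ) : Finset ℕ :=
  e.filter (fun x => (e.filter (· ≤ x)).card ≠ j)

/-- Relabel the elements of `e` order-preservingly by their ranks in `V`. -/
def relabel (V : Finset ℕ) (e : Finset ℕ) : Finset ℕ :=
  e.image (fun x => (V.filter (· ≤ x)).card)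

/-- `S^(−j)`: delete from each edge of the pattern `S` its `j`-th smallest element and
relabel the remaining vertices order-preservingly. -/
def patternDelete (j : ℕ) (S : Finset (Finset ℕ)) : Finset (Finset ℕ) :=
  (S.image (deleteJth j)).image (relabel ((S.image (deleteJth j)).biUnion id))

/-!
Two positions `i < j` are separated in a pattern if the `i`-th vertices of both edges precede the
`j`-th vertices of both. In a collectable pattern being unseparated is a transitive relation, so the
positions split into blocks, and the lengths of the blocks form the composition. Hence the patterns
of a mismatched pair differ in whether some two positions `i`, `j` are separated. This makes a
`{P, Q}`-clique recoverable from its columns, the sets of the `l`-th smallest vertices of its edges: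
columns `i` and `j` determine which pattern two edges form, hence the order of the edges in all
other columns. So at most `(rn).choose k ^ r` families of `k` edges can be cliques of size `k`, and
the first moment method gives the upper bound.

For the lower bound, a collectable pattern has blow-ups of every size `k ≈ n ^ (1 / r)`. Replacing
their vertices by intervals of length about `n / (r * k)` yields `k` disjoint boxes such that edges
chosen from distinct boxes form a clique. The number `Y` of edges in a box has mean bounded away
from zero, `Y - Y * (Y - 1) / 2` bounds the indicator of `0 < Y` from below, and by the second
moment method the sum of these polynomials over all boxes is of order `k`.
-/

/-! ### Counting perfect matchings -/

section Matchings

variable {α : Type*} {r n : ℕ} {V : Finset α} {F M : Finset (Finset α)}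

/-- A partial `r`-matching of a vertex set `V`: a family of pairwise disjoint `r`-element subsets
of `V`. -/
structure IsPartialMatching (r : ℕ) (V : Finset α) (F : Finset (Finset α)) : Prop where
  card_eq : ∀ e ∈ F, #e = r
  disjoint : ∀ e ∈ F, ∀ f ∈ F, e ≠ f → Disjoint e f
  subset : ∀ e ∈ F, e ⊆ V

lemma IsPartialMatching.mono (hM : IsPartialMatching r V M) (h : F ⊆ M) : IsPartialMatching r V F :=
  ⟨fun e he ↦ hM.card_eq e (h he), fun e he f hf ↦ hM.disjoint e (h he) f (h hf),
    fun e he ↦ hM.subset e (h he)⟩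

lemma isPartialMatching_singleton {e : Finset α} (he : #e = r) (h : e ⊆ V) :
    IsPartialMatching r V {e} where
  card_eq _ hf := mem_singleton.1 hf ▸ he
  disjoint _ hf _ hg hfg := absurd ((mem_singleton.1 hf).trans (mem_singleton.1 hg).symm) hfg
  subset _ hf := mem_singleton.1 hf ▸ h

variable [DecidableEq α]

/-- The perfect `r`-matchings of the vertex set `V`: partial matchings that cover `V`. -/
noncomputable def perfectMatchings (r : ℕ) (V : Finset α) : Finset (Finset (Finset α)) :=
  {M ∈ V.powerset.powerset | IsPartialMatching r V M ∧ M.biUnion id = V}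

lemma mem_perfectMatchings :
    M ∈ perfectMatchings r V ↔ IsPartialMatching r V M ∧ M.biUnion id = V := by
  simp only [perfectMatchings, mem_filter, mem_powerset, and_iff_right_iff_imp]
  exact fun hM e he ↦ mem_powerset.2 (hM.1.subset e he)

namespace IsPartialMatching

lemma biUnion_subset (hF : IsPartialMatching r V F) : F.biUnion id ⊆ V :=
  Finset.biUnion_subset.2 hF.subset

lemma card_biUnion (hF : IsPartialMatching r V F) : #(F.biUnion id) = #F * r := by
  rw [Finset.card_biUnion (t := id) fun e he f hf hef ↦ hF.disjoint e he f hf hef]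
  exact sum_const_nat hF.card_eq

lemma disjoint_of_mem_sdiff (hM : IsPartialMatching r (V \ F.biUnion id) M) {e f : Finset α}
    (he : e ∈ M) (hf : f ∈ F) : Disjoint e f :=
  (disjoint_sdiff_self_left.mono_left (hM.subset e he)).mono_right (subset_biUnion_of_mem id hf)

lemma disjoint_of_sdiff (hr : 0 < r) (hM : IsPartialMatching r (V \ F.biUnion id) M) :
    Disjoint M F := by
  refine Finset.disjoint_left.2 fun e heM heF ↦ ?_
  have he : e = ∅ := disjoint_self.1 (hM.disjoint_of_mem_sdiff heM heF)
  simpa [he, hr.ne] using hM.card_eq e heM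

lemma union (hF : IsPartialMatching r V F) (hM : IsPartialMatching r (V \ F.biUnion id) M) :
    IsPartialMatching r V (M ∪ F) where
  card_eq e he := (mem_union.1 he).elim (hM.card_eq e) (hF.card_eq e)
  subset e he := (mem_union.1 he).elim (fun h ↦ (hM.subset e h).trans sdiff_subset) (hF.subset e)
  disjoint e he f hf hef := by
    rcases mem_union.1 he with he | he <;> rcases mem_union.1 hf with hf | hf
    · exact hM.disjoint e he f hf hef
    · exact hM.disjoint_of_mem_sdiff he hf
    · exact (hM.disjoint_of_mem_sdiff hf he).symm
    · exact hF.disjoint e he f hf hef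

lemma sdiff (hM : IsPartialMatching r V M) (h : F ⊆ M) :
    IsPartialMatching r (V \ F.biUnion id) (M \ F) where
  card_eq e he := hM.card_eq e (mem_sdiff.1 he).1
  disjoint e he f hf := hM.disjoint e (mem_sdiff.1 he).1 f (mem_sdiff.1 hf).1
  subset e he := by
    obtain ⟨heM, heF⟩ := mem_sdiff.1 he
    refine subset_sdiff.2 ⟨hM.subset e heM, (disjoint_biUnion_right _ _ _).2 fun f hf ↦ ?_⟩
    exact hM.disjoint e heM f (h hf) (ne_of_mem_of_not_mem hf heF).symm

lemma card_perfectMatchings_filter_subset (hr : 0 < r) (hF : IsPartialMatching r V F) :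
    #{M ∈ perfectMatchings r V | F ⊆ M} = #(perfectMatchings r (V \ F.biUnion id)) := by
  refine card_nbij' (· \ F) (· ∪ F) ?_ ?_ ?_ ?_
  · intro M hM
    obtain ⟨hM, hFM⟩ := mem_filter.1 hM
    obtain ⟨hM, hMV⟩ := mem_perfectMatchings.1 hM
    refine mem_perfectMatchings.2 ⟨hM.sdiff hFM, (hM.sdiff hFM).biUnion_subset.antisymm ?_⟩
    rw [sdiff_le_iff, ← hMV, sup_eq_union, ← union_biUnion, union_sdiff_of_subset hFM]
  · intro M hM
    obtain ⟨hM, hMV⟩ := mem_perfectMatchings.1 hM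
    refine mem_filter.2 ⟨mem_perfectMatchings.2 ⟨hF.union hM, ?_⟩, subset_union_right⟩
    rw [union_biUnion, hMV, sdiff_union_of_subset hF.biUnion_subset]
  · exact fun M hM ↦ sdiff_union_of_subset (mem_filter.1 hM).2
  · exact fun M hM ↦ union_sdiff_cancel_right
      ((mem_perfectMatchings.1 hM).1.disjoint_of_sdiff hr)

end IsPartialMatching

lemma perfectMatchings_empty (hr : 0 < r) : perfectMatchings r (∅ : Finset α) = {∅} := by
  ext M
  rw [mem_perfectMatchings, mem_singleton]
  constructor
  · rintro ⟨hM, -⟩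
    refine eq_empty_of_forall_notMem fun e he ↦ hr.ne ?_
    rw [← hM.card_eq e he, subset_empty.1 (hM.subset e he), card_empty]
  · rintro rfl
    exact ⟨⟨by simp, by simp, by simp⟩, biUnion_empty⟩

lemma perfectMatchings_eq_biUnion {v : α} (hv : v ∈ V) :
    perfectMatchings r V = {e ∈ V.powersetCard r | {v} ⊆ e}.biUnion
      fun e ↦ {M ∈ perfectMatchings r V | {e} ⊆ M} := by
  ext M
  simp only [mem_biUnion, mem_filter, mem_powersetCard, singleton_subset_iff]
  refine ⟨fun hM ↦ ?_, fun ⟨_, _, hM, _⟩ ↦ hM⟩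
  obtain ⟨hM', hMV⟩ := mem_perfectMatchings.1 hM
  obtain ⟨e, he, hve⟩ := mem_biUnion.1 (hMV ▸ hv)
  exact ⟨e, ⟨⟨hM'.subset e he, hM'.card_eq e he⟩, hve⟩, hM, he⟩

theorem card_perfectMatchings (hr : 0 < r) (hV : #V = n * r) :
    #(perfectMatchings r V) = n.uniformBell r := by
  induction n generalizing V with
  | zero =>
    obtain rfl : V = ∅ := by simpa using hV
    rw [perfectMatchings_empty hr, card_singleton, Nat.uniformBell_zero_left]
  | succ n ih =>
    obtain ⟨v, hv⟩ : V.Nonempty := card_pos.1 (by rw [hV]; positivity)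
    have hfiber : ∀ e ∈ V.powersetCard r, #{M ∈ perfectMatchings r V | {e} ⊆ M} =
        n.uniformBell r := fun e he ↦ by
      obtain ⟨heV, her⟩ := mem_powersetCard.1 he
      rw [(isPartialMatching_singleton her heV).card_perfectMatchings_filter_subset hr]
      apply ih
      rw [singleton_biUnion, id, card_sdiff_of_subset heV, hV, her, Nat.succ_mul,
        Nat.add_sub_cancel]
    rw [perfectMatchings_eq_biUnion hv, Finset.card_biUnion]
    · rw [sum_const_nat fun e he ↦ hfiber e (mem_filter.1 he).1,
        card_filter_powersetCard_subset _ _ _ (singleton_subset_iff.2 hv) (by simpa), hV,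
        card_singleton, Nat.succ_mul, Nat.uniformBell_succ_left]
    · simp only [mem_coe, mem_filter, singleton_subset_iff, Set.PairwiseDisjoint, Set.Pairwise,
        Function.onFun]
      rintro e ⟨-, hve⟩ f ⟨-, hvf⟩ hef
      refine disjoint_filter.2 fun M hM he hf ↦ ?_
      exact disjoint_left.1 ((mem_perfectMatchings.1 hM).1.disjoint e he f hf hef) hve hvf

end Matchings

lemma mem_matchingFamilies_iff {r n : ℕ} (hr : 0 < r) {M : Finset (Finset ℕ)} :
    M ∈ matchingFamilies r n ↔ M ∈ perfectMatchings r (Icc 1 (r * n)) := by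
  rw [matchingFamilies, mem_filter, mem_perfectMatchings]
  constructor
  · rintro ⟨hM, -, hcard, hdisj, hV⟩
    exact ⟨⟨hcard, hdisj, fun e he ↦ mem_powerset.1 (mem_powerset.1 hM he)⟩, hV⟩
  · rintro ⟨hM, hV⟩
    refine ⟨mem_powerset.2 fun e he ↦ mem_powerset.2 (hM.subset e he), ?_, hM.card_eq,
      hM.disjoint, hV⟩
    have hcard := hM.card_biUnion
    rw [hV, Nat.card_Icc, Nat.add_sub_cancel, mul_comm] at hcard
    exact (Nat.eq_of_mul_eq_mul_right hr hcard).symm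

lemma matchingFamilies_eq_perfectMatchings {r n : ℕ} (hr : 0 < r) :
    matchingFamilies r n = perfectMatchings r (Icc 1 (r * n)) :=
  Finset.ext fun _ ↦ mem_matchingFamilies_iff hr

lemma isPartialMatching_of_mem_matchingFamilies {r n : ℕ} (hr : 0 < r) {M : Finset (Finset ℕ)}
    (hM : M ∈ matchingFamilies r n) : IsPartialMatching r (Icc 1 (r * n)) M :=
  (mem_perfectMatchings.1 ((mem_matchingFamilies_iff hr).1 hM)).1

lemma card_matchingFamilies {r n : ℕ} (hr : 0 < r) : #(matchingFamilies r n) = n.uniformBell r := by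
  rw [matchingFamilies_eq_perfectMatchings hr]
  exact card_perfectMatchings hr (by rw [Nat.card_Icc, Nat.add_sub_cancel, mul_comm])

lemma card_matchingFamilies_filter_subset {r n : ℕ} (hr : 0 < r) {F : Finset (Finset ℕ)}
    (hF : IsPartialMatching r (Icc 1 (r * n)) F) :
    #{M ∈ matchingFamilies r n | F ⊆ M} = (n - #F).uniformBell r := by
  rw [matchingFamilies_eq_perfectMatchings hr, hF.card_perfectMatchings_filter_subset hr]
  apply card_perfectMatchings hr
  rw [card_sdiff_of_subset hF.biUnion_subset, hF.card_biUnion, Nat.card_Icc, Nat.add_sub_cancel,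
    Nat.sub_mul, mul_comm n]

/-! ### Random matchings -/

section Probability

variable {r n : ℕ} {X Y : Finset (Finset ℕ) → ℝ} {A B : Finset (Finset ℕ) → Prop} {ι : Type*}

lemma expect_sum (T : Finset ι) (W : ι → Finset (Finset ℕ) → ℝ) :
    _root_.expect r n (fun M ↦ ∑ i ∈ T, W i M) = ∑ i ∈ T, _root_.expect r n (W i) := by
  simp only [_root_.expect, ← sum_div]
  rw [sum_comm]

lemma expect_add : _root_.expect r n (fun M ↦ X M + Y M) =
    _root_.expect r n X + _root_.expect r n Y := by
  simp only [_root_.expect, sum_add_distrib, add_div]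

lemma expect_const_mul (c : ℝ) : _root_.expect r n (fun M ↦ c * X M) = c * _root_.expect r n X := by
  simp only [_root_.expect, ← mul_sum, mul_div_assoc]

lemma expect_mono (h : ∀ M ∈ matchingFamilies r n, X M ≤ Y M) :
    _root_.expect r n X ≤ _root_.expect r n Y :=
  div_le_div_of_nonneg_right (sum_le_sum h) (Nat.cast_nonneg _)

lemma expect_congr (h : ∀ M ∈ matchingFamilies r n, X M = Y M) :
    _root_.expect r n X = _root_.expect r n Y := by
  simp only [_root_.expect, sum_congr rfl h]

lemma prob_eq_expect : prob r n A = _root_.expect r n (fun M ↦ if A M then 1 else 0) := by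
  rw [prob, _root_.expect, sum_boole]

lemma prob_mono (h : ∀ M ∈ matchingFamilies r n, A M → B M) : prob r n A ≤ prob r n B := by
  rw [prob_eq_expect, prob_eq_expect]
  refine expect_mono fun M hM ↦ ?_
  split_ifs with hA hB hB
  exacts [le_rfl, absurd (h M hM hA) hB, zero_le_one, le_rfl]

lemma prob_exists_le (T : Finset ι) (E : ι → Finset (Finset ℕ) → Prop) :
    prob r n (fun M ↦ ∃ x ∈ T, E x M) ≤ ∑ x ∈ T, prob r n (E x) := by
  simp only [prob_eq_expect, ← expect_sum]
  refine expect_mono fun M _ ↦ ?_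
  have hnonneg : ∀ x ∈ T, (0 : ℝ) ≤ if E x M then 1 else 0 := fun x _ ↦ by positivity
  split_ifs with h
  · obtain ⟨x, hx, hxM⟩ := h
    exact (if_pos hxM).symm.trans_le (single_le_sum hnonneg hx)
  · exact sum_nonneg hnonneg

lemma matchingFamilies_card_pos (hr : 0 < r) : 0 < #(matchingFamilies r n) := by
  rw [card_matchingFamilies hr]
  refine Nat.pos_of_ne_zero fun h ↦ ?_
  have := Nat.uniformBell_mul_eq n hr.ne'
  rw [h, zero_mul, zero_mul] at this
  exact (Nat.factorial_ne_zero _) this.symm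

lemma prob_add_prob_not (hr : 0 < r) : prob r n A + prob r n (fun M ↦ ¬ A M) = 1 := by
  have hpos : (0 : ℝ) < #(matchingFamilies r n) := Nat.cast_pos.2 (matchingFamilies_card_pos hr)
  rw [prob, prob, ← add_div, ← Nat.cast_add, card_filter_add_card_filter_not, div_self hpos.ne']

lemma prob_le_abs_sum_le {T : Finset ι} {W : ι → Finset (Finset ℕ) → ℝ} {a b t : ℝ}
    (ha : ∀ x ∈ T, ∀ y ∈ T, x ≠ y → _root_.expect r n (fun M ↦ W x M * W y M) ≤ a)
    (hb : ∀ x ∈ T, _root_.expect r n (fun M ↦ W x M * W x M) ≤ b) (ht : 0 < t) :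
    prob r n (fun M ↦ t ≤ |∑ x ∈ T, W x M|) ≤ (#T * (#T - 1) * a + #T * b) / t ^ 2 := by
  have hmarkov : prob r n (fun M ↦ t ≤ |∑ x ∈ T, W x M|) ≤
      (t ^ 2)⁻¹ * _root_.expect r n (fun M ↦ (∑ x ∈ T, W x M) ^ 2) := by
    rw [prob_eq_expect, ← expect_const_mul]
    refine expect_mono fun M _ ↦ ?_
    split_ifs with h
    · rw [inv_mul_eq_div, one_le_div (by positivity), ← sq_abs (∑ x ∈ T, W x M)]
      gcongr
    · positivity
  have hmoment : _root_.expect r n (fun M ↦ (∑ x ∈ T, W x M) ^ 2) ≤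
      #T * (#T - 1) * a + #T * b := by
    have hrow : ∀ x ∈ T, ∑ y ∈ T, _root_.expect r n (fun M ↦ W x M * W y M) ≤
        (#T - 1) * a + b := fun x hx ↦ by
      rw [← sum_erase_add _ _ hx]
      gcongr
      · refine (sum_le_card_nsmul _ _ a fun y hy ↦ ?_).trans_eq ?_
        · exact ha x hx y (mem_of_mem_erase hy) (ne_of_mem_erase hy).symm
        · rw [nsmul_eq_mul, cast_card_erase_of_mem hx]
      · exact hb x hx
    simp only [sq, sum_mul_sum, expect_sum]
    refine (sum_le_card_nsmul _ _ _ hrow).trans_eq ?_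
    rw [nsmul_eq_mul]
    ring
  calc _ ≤ _ := hmarkov
    _ ≤ (t ^ 2)⁻¹ * (#T * (#T - 1) * a + #T * b) := by gcongr
    _ = _ := by rw [inv_mul_eq_div]

/-- The probability that a random `r`-matching of size `n` contains `s` given disjoint edges
(junk if `n < s`). -/
noncomputable def inclusionProb (r n s : ℕ) : ℝ :=
  (n - s).uniformBell r / n.uniformBell r

lemma inclusionProb_nonneg (s : ℕ) : 0 ≤ inclusionProb r n s := by
  unfold inclusionProb
  positivity

lemma prob_subset_eq (hr : 0 < r) {F : Finset (Finset ℕ)}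
    (hF : IsPartialMatching r (Icc 1 (r * n)) F) :
    prob r n (F ⊆ ·) = inclusionProb r n #F := by
  rw [prob, inclusionProb, card_matchingFamilies hr, ← card_matchingFamilies_filter_subset hr hF]
  congr!

lemma prob_subset_le (hr : 0 < r) (F : Finset (Finset ℕ)) :
    prob r n (F ⊆ ·) ≤ inclusionProb r n #F := by
  by_cases hF : IsPartialMatching r (Icc 1 (r * n)) F
  · exact (prob_subset_eq hr hF).le
  · have hzero : prob r n (F ⊆ ·) = 0 := by
      simp only [prob, div_eq_zero_iff, Nat.cast_eq_zero, card_eq_zero, filter_eq_empty_iff]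
      exact .inl fun M hM h ↦ hF ((isPartialMatching_of_mem_matchingFamilies hr hM).mono h)
    exact hzero.trans_le (inclusionProb_nonneg _)

lemma inclusionProb_eq (hr : 0 < r) {s : ℕ} (hs : s ≤ n) :
    inclusionProb r n s =
      (r.factorial : ℝ) ^ s * n.descFactorial s / (r * n).descFactorial (r * s) := by
  have hpos : 0 < r.factorial ^ (n - s) * (n - s).factorial := by positivity
  have hnat : (n - s).uniformBell r * (r * n).descFactorial (r * s) =
      r.factorial ^ s * n.descFactorial s * n.uniformBell r := by
    refine Nat.eq_of_mul_eq_mul_right hpos ?_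
    calc _ = (n - s).uniformBell r * r.factorial ^ (n - s) * (n - s).factorial *
          (r * n).descFactorial (r * s) := by ring
      _ = (r * n).factorial := by
        rw [Nat.uniformBell_mul_eq _ hr.ne', mul_comm (n - s) r, Nat.mul_sub,
          Nat.factorial_mul_descFactorial (Nat.mul_le_mul_left r hs)]
      _ = n.uniformBell r * (r.factorial ^ (n - s) * r.factorial ^ s) *
          ((n - s).factorial * n.descFactorial s) := by
        rw [← pow_add, Nat.sub_add_cancel hs, Nat.factorial_mul_descFactorial hs,
          Nat.uniformBell_mul_eq _ hr.ne', mul_comm n r]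
      _ = _ := by ring
  have hdesc : 0 < (r * n).descFactorial (r * s) :=
    Nat.descFactorial_pos.2 (Nat.mul_le_mul_left r hs)
  have hbell : 0 < n.uniformBell r := card_matchingFamilies hr ▸ matchingFamilies_card_pos hr
  rw [inclusionProb, div_eq_div_iff (Nat.cast_pos.2 hbell).ne' (Nat.cast_pos.2 hdesc).ne']
  exact_mod_cast hnat

end Probability

section AAS

open Filter Topology

variable {r : ℕ} {A B : ℕ → Finset (Finset ℕ) → Prop}

/-- The event `A n` holds asymptotically almost surely for the random `r`-matching of size `n`. -/
def AAS (r : ℕ) (A : ℕ → Finset (Finset ℕ) → Prop) : Prop :=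
  Tendsto (fun n ↦ prob r n (A n)) atTop (𝓝 1)

lemma aas_iff_tendsto_prob_not (hr : 0 < r) :
    AAS r A ↔ Tendsto (fun n ↦ prob r n (fun M ↦ ¬ A n M)) atTop (𝓝 0) := by
  have hnot : ∀ n, prob r n (fun M ↦ ¬ A n M) = 1 - prob r n (A n) := fun n ↦
    eq_sub_of_add_eq' (prob_add_prob_not hr)
  constructor <;> intro h
  · simpa only [hnot, sub_self] using h.const_sub 1
  · simpa only [AAS, hnot, sub_sub_cancel, sub_zero] using h.const_sub 1

lemma aas_of_prob_not_le (hr : 0 < r) {u : ℕ → ℝ} (hu : Tendsto u atTop (𝓝 0))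
    (h : ∀ᶠ n in atTop, prob r n (fun M ↦ ¬ A n M) ≤ u n) : AAS r A :=
  (aas_iff_tendsto_prob_not hr).2 <| squeeze_zero'
    (.of_forall fun _ ↦ div_nonneg (Nat.cast_nonneg _) (Nat.cast_nonneg _)) h hu

lemma AAS.and (hr : 0 < r) (hA : AAS r A) (hB : AAS r B) : AAS r (fun n M ↦ A n M ∧ B n M) := by
  refine aas_of_prob_not_le hr (u := fun n ↦ prob r n (fun M ↦ ¬ A n M) +
    prob r n (fun M ↦ ¬ B n M)) ?_ (.of_forall fun n ↦ ?_)
  · simpa only [add_zero] using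
      ((aas_iff_tendsto_prob_not hr).1 hA).add ((aas_iff_tendsto_prob_not hr).1 hB)
  · rw [prob_eq_expect, prob_eq_expect, prob_eq_expect, ← expect_add]
    refine expect_mono fun M _ ↦ ?_
    by_cases hA : A n M <;> by_cases hB : B n M <;> simp [hA, hB]

end AAS

/-! ### Patterns as pairs of increasing sequences -/

section Enumeration

variable {r : ℕ} {e f : Finset ℕ}

/-- The increasing enumeration of an `r`-element set `e` (junk if `#e ≠ r`). -/
def enum (r : ℕ) (e : Finset ℕ) : Fin r ↪o ℕ :=
  if h : #e = r then e.orderEmbOfFin h else Fin.valOrderEmb r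

lemma image_enum (he : #e = r) : univ.image (enum r e) = e := by
  rw [enum, dif_pos he, image_orderEmbOfFin_univ]

lemma enum_mem (he : #e = r) (l : Fin r) : enum r e l ∈ e := by
  simpa only [image_enum he] using mem_image_of_mem (enum r e) (mem_univ l)

lemma enum_ne_enum (he : #e = r) (hf : #f = r) (h : Disjoint e f) (l m : Fin r) :
    enum r e l ≠ enum r f m :=
  disjoint_iff_ne.1 h _ (enum_mem he l) _ (enum_mem hf m)

lemma eq_of_image_univ_eq {a b : Fin r → ℕ} (ha : StrictMono a) (hb : StrictMono b)
    (h : univ.image a = univ.image b) : a = b := by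
  rw [← ha.range_inj hb, ← Set.image_univ, ← Set.image_univ, ← coe_univ, ← coe_image, h, coe_image]

end Enumeration

section Patterns

variable {r : ℕ} {P : Finset (Finset ℕ)} {e f : Finset ℕ} {a b A B : Fin r ↪o ℕ}

/-- The pairs of sequences `(a, b)` and `(A, B)` are interleaved in the same way. -/
def SameOrder (a b A B : Fin r ↪o ℕ) : Prop :=
  ∀ l m, (a l < b m ↔ A l < B m) ∧ (b m < a l ↔ B m < A l)

/-- The unordered pairs of sequences `{a, b}` and `{A, B}` are interleaved in the same way. -/
def SamePattern (a b A B : Fin r ↪o ℕ) : Prop :=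
  SameOrder a b A B ∨ SameOrder a b B A

/-- The sequences `A` and `B` enumerate the two edges of the `r`-pattern `P`. -/
structure EnumeratesPattern (P : Finset (Finset ℕ)) (A B : Fin r ↪o ℕ) : Prop where
  ne : ∀ l m, A l ≠ B m
  eq_pair : P = {univ.image A, univ.image B}
  union_eq : univ.image A ∪ univ.image B = Icc 1 (2 * r)

lemma SameOrder.ne_iff (h : SameOrder a b A B) (l m : Fin r) : a l ≠ b m ↔ A l ≠ B m := by
  rw [ne_iff_lt_or_gt, ne_iff_lt_or_gt, (h l m).1, (h l m).2]

lemma EnumeratesPattern.symm (h : EnumeratesPattern P A B) : EnumeratesPattern P B A :=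
  ⟨fun l m ↦ (h.ne m l).symm, h.eq_pair.trans (pair_comm _ _), (union_comm _ _).trans h.union_eq⟩

lemma exists_enumeratesPattern (hr : 0 < r) (hP : IsOrderedMatching r 2 P) :
    ∃ A B : Fin r ↪o ℕ, EnumeratesPattern P A B ∧ 1 ∈ univ.image A := by
  obtain ⟨hcard, hedge, hdisj, hV⟩ := hP
  obtain ⟨e, f, hef, rfl⟩ := card_eq_two.1 hcard
  have he : #e = r := hedge e (mem_insert_self e _)
  have hf : #f = r := hedge f (mem_insert_of_mem (mem_singleton_self f))
  have hV : e ∪ f = Icc 1 (2 * r) := by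
    rw [mul_comm, ← hV, biUnion_insert, singleton_biUnion, id, id]
  have henum : EnumeratesPattern {e, f} (enum r e) (enum r f) :=
    ⟨enum_ne_enum he hf (hdisj e (by simp) f (by simp) hef), by rw [image_enum he, image_enum hf],
      by rw [image_enum he, image_enum hf, hV]⟩
  rcases mem_union.1 (hV ▸ mem_Icc.2 (by lia) : 1 ∈ e ∪ f) with h1 | h1
  · exact ⟨_, _, henum, (image_enum he).symm ▸ h1⟩
  · exact ⟨_, _, henum.symm, (image_enum hf).symm ▸ h1⟩

lemma EnumeratesPattern.samePattern (hP : EnumeratesPattern P A B) (he : #e = r) (hf : #f = r)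
    (h : FormsPattern r e f P) : SamePattern (enum r e) (enum r f) A B := by
  obtain ⟨φ, hφ, -, hpair⟩ := h
  have he' : ∀ l, enum r e l ∈ (↑(e ∪ f) : Set ℕ) := fun l ↦ by simp [enum_mem he]
  have hf' : ∀ l, enum r f l ∈ (↑(e ∪ f) : Set ℕ) := fun l ↦ by simp [enum_mem hf]
  have hmono_e : StrictMono (φ ∘ enum r e) := fun x y hxy ↦
    hφ (he' x) (he' y) ((enum r e).strictMono hxy)
  have hmono_f : StrictMono (φ ∘ enum r f) := fun x y hxy ↦
    hφ (hf' x) (hf' y) ((enum r f).strictMono hxy)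
  have himage : ∀ {g : Finset ℕ}, #g = r → g.image φ = univ.image (φ ∘ enum r g) := fun hg ↦ by
    rw [← image_image, image_enum hg]
  have horder : ∀ {C D : Fin r ↪o ℕ}, φ ∘ enum r e = C → φ ∘ enum r f = D →
      SameOrder (enum r e) (enum r f) C D := by
    intro C D hC hD l m
    rw [← hC, ← hD]
    exact ⟨(hφ.lt_iff_lt (he' l) (hf' m)).symm, (hφ.lt_iff_lt (hf' m) (he' l)).symm⟩
  rw [hP.eq_pair, himage he, himage hf, ← coe_inj, coe_pair, coe_pair, Set.pair_eq_pair_iff]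
    at hpair
  rcases hpair with ⟨hC, hD⟩ | ⟨hC, hD⟩
  · exact .inl (horder (eq_of_image_univ_eq hmono_e A.strictMono hC)
      (eq_of_image_univ_eq hmono_f B.strictMono hD))
  · exact .inr (horder (eq_of_image_univ_eq hmono_e B.strictMono hC)
      (eq_of_image_univ_eq hmono_f A.strictMono hD))

lemma EnumeratesPattern.formsPattern (hP : EnumeratesPattern P A B) (h : SameOrder a b A B) :
    FormsPattern r (univ.image a) (univ.image b) P := by
  have hinj : Function.Injective (Sum.elim a b) :=
    a.injective.sumElim b.injective fun l m ↦ (h.ne_iff l m).2 (hP.ne l m)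
  set φ : ℕ → ℕ := Function.extend (Sum.elim a b) (Sum.elim A B) 0
  have hφa : ∀ l, φ (a l) = A l := fun l ↦ hinj.extend_apply (Sum.elim A B) 0 (.inl l)
  have hφb : ∀ l, φ (b l) = B l := fun l ↦ hinj.extend_apply (Sum.elim A B) 0 (.inr l)
  have ha : (univ.image a).image φ = univ.image A := by
    rw [image_image]; exact image_congr fun l _ ↦ hφa l
  have hb : (univ.image b).image φ = univ.image B := by
    rw [image_image]; exact image_congr fun l _ ↦ hφb l
  refine ⟨φ, ?_, by rw [image_union, ha, hb, hP.union_eq], by rw [ha, hb, hP.eq_pair]⟩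
  rintro x hx y hy hxy
  simp only [coe_union, coe_image, coe_univ, Set.image_univ, Set.mem_union, Set.mem_range]
    at hx hy
  rcases hx with ⟨l, rfl⟩ | ⟨l, rfl⟩ <;> rcases hy with ⟨m, rfl⟩ | ⟨m, rfl⟩
  · rw [hφa, hφa]; exact A.strictMono (a.lt_iff_lt.1 hxy)
  · rw [hφa, hφb]; exact (h l m).1.1 hxy
  · rw [hφa, hφb]; exact (h m l).2.1 hxy
  · rw [hφb, hφb]; exact B.strictMono (b.lt_iff_lt.1 hxy)

lemma FormsPattern.symm (h : FormsPattern r e f P) : FormsPattern r f e P := by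
  obtain ⟨φ, hφ, himage, hpair⟩ := h
  exact ⟨φ, by rwa [union_comm], by rwa [union_comm], by rwa [pair_comm]⟩

/-- The positions `i` and `j` are separated in `(A, B)`: the larger of the two `i`-th entries is
smaller than the smaller of the two `j`-th entries. -/
def Separates (A B : Fin r ↪o ℕ) (i j : Fin r) : Prop :=
  A i < B j ∧ B i < A j

lemma Separates.lt {i j : Fin r} (h : Separates A B i j) : i < j := by
  by_contra! hji
  exact absurd (h.1.trans_le (B.monotone hji)) (h.2.trans_le (A.monotone hji)).asymm

lemma Separates.mono {i i' j j' : Fin r} (h : Separates A B i j) (hi : i' ≤ i) (hj : j ≤ j') :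
    Separates A B i' j' :=
  ⟨((A.monotone hi).trans_lt h.1).trans_le (B.monotone hj),
    ((B.monotone hi).trans_lt h.2).trans_le (A.monotone hj)⟩

lemma SamePattern.separates_iff (h : SamePattern a b A B) (i j : Fin r) :
    Separates a b i j ↔ Separates A B i j := by
  rcases h with h | h
  · rw [Separates, Separates, (h i j).1, (h j i).2]
  · rw [Separates, Separates, (h i j).1, (h j i).2, and_comm]

lemma SamePattern.lt_iff_lt_iff (h : SamePattern a b A B) (hAB : ∀ l m, A l ≠ B m) (i j : Fin r) :
    (a i < b i ↔ a j < b j) ↔ (A i < B i ↔ A j < B j) := by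
  rcases h with h | h
  · rw [(h i i).1, (h j j).1]
  · rw [(h i i).1, (h j j).1]
    have := hAB i i
    have := hAB j j
    lia

lemma lt_iff_lt_of_not_separates {i j : Fin r} (hAB : ∀ l m, A l ≠ B m)
    (hij : ¬ Separates A B i j) (hji : ¬ Separates A B j i) :
    (A i < B i ↔ A j < B j) ∧ (A i < B j ↔ A j < B j) := by
  have := hAB i j
  have := hAB j i
  unfold Separates at hij hji
  rcases lt_trichotomy i j with h | rfl | h
  · have := A.strictMono h
    have := B.strictMono h
    lia
  · exact ⟨Iff.rfl, Iff.rfl⟩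
  · have := A.strictMono h
    have := B.strictMono h
    lia

/-- Being unseparated is a transitive relation between the positions of `(A, B)`. -/
def UnseparatedTrans (A B : Fin r ↪o ℕ) : Prop :=
  ∀ i j k : Fin r, i < j → j < k → ¬ Separates A B i j → ¬ Separates A B j k →
    ¬ Separates A B i k

lemma EnumeratesPattern.samePattern_of_isClique (hP : EnumeratesPattern P A B)
    {K : Finset (Finset ℕ)} (hK : IsClique r {P} K) (he : e ∈ K) (hf : f ∈ K) (hef : e ≠ f) :
    SamePattern (enum r e) (enum r f) A B := by
  obtain ⟨_, rfl, hforms⟩ := hK.2.2 e he f hf hef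
  exact hP.samePattern (hK.1 e he) (hK.1 f hf) hforms

lemma unseparatedTrans_of_collectable (hP : EnumeratesPattern P A B) (h : Collectable r P) :
    UnseparatedTrans A B := by
  intro i j k hij hjk hnij hnjk hik
  obtain ⟨K, hK, hcard⟩ := h 3
  obtain ⟨e, f, g, hef, heg, hfg, rfl⟩ := card_eq_three.1 hcard
  have hsep : ∀ x ∈ ({e, f, g} : Finset (Finset ℕ)), ∀ y ∈ ({e, f, g} : Finset (Finset ℕ)),
      x ≠ y → ¬ Separates (enum r x) (enum r y) i j ∧ ¬ Separates (enum r x) (enum r y) j k ∧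
        Separates (enum r x) (enum r y) i k ∧ enum r x j ≠ enum r y j := by
    intro x hx y hy hxy
    have h := hP.samePattern_of_isClique hK hx hy hxy
    rw [h.separates_iff, h.separates_iff, h.separates_iff]
    exact ⟨hnij, hnjk, hik,
      enum_ne_enum (hK.1 x hx) (hK.1 y hy) (hK.2.1 x hx y hy hxy) j j⟩
  have := hsep e (by simp) f (by simp) hef
  have := hsep e (by simp) g (by simp) heg
  have := hsep f (by simp) g (by simp) hfg
  have hmono : ∀ x : Finset ℕ, enum r x i < enum r x j ∧ enum r x j < enum r x k := fun x ↦
    ⟨(enum r x).strictMono hij, (enum r x).strictMono hjk⟩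
  have := hmono e
  have := hmono f
  have := hmono g
  -- If `e`, `f`, `g` increase at position `j`, then `e k ≤ f j < g i` contradicts `hik`.
  unfold Separates at *
  lia

end Patterns

/-! ### Blow-ups of a pattern -/

section BlowUp

variable {r k : ℕ} {P : Finset (Finset ℕ)} {a b A B : Fin r ↪o ℕ}

/-- The index of the block of `(A, B)` containing the position `l`, when unseparatedness is an
equivalence relation with consecutive classes: the number of positions separated from `l` and
to the left of it. -/
noncomputable def blockIndex (A B : Fin r ↪o ℕ) (l : Fin r) : ℕ :=
  #{i | Separates A B i l}

lemma blockIndex_lt (A B : Fin r ↪o ℕ) (l : Fin r) : blockIndex A B l < r := by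
  refine (card_lt_univ_of_notMem (x := l) ?_).trans_eq (Fintype.card_fin r)
  exact fun h ↦ (mem_filter_univ l).1 h |>.lt.false

lemma Separates.blockIndex_lt {i j : Fin r} (h : Separates A B i j) :
    blockIndex A B i < blockIndex A B j := by
  refine card_lt_card (ssubset_iff_of_subset (monotone_filter_right _ ?_) |>.2 ⟨i, ?_, ?_⟩)
  · exact fun x _ hx ↦ hx.mono le_rfl h.lt.le
  · exact (mem_filter_univ i).2 h
  · exact fun hi ↦ ((mem_filter_univ i).1 hi).lt.false

lemma UnseparatedTrans.blockIndex_le (hAB : UnseparatedTrans A B) {i j : Fin r}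
    (hij : ¬ Separates A B i j) : blockIndex A B j ≤ blockIndex A B i := by
  refine card_le_card (monotone_filter_right _ fun x _ hxj ↦ ?_)
  by_contra hxi
  rcases lt_trichotomy x i with h | rfl | h
  · rcases lt_trichotomy i j with h' | rfl | h'
    · exact hAB x i j h h' hxi hij hxj
    · exact hxi hxj
    · exact hxi (hxj.mono le_rfl h'.le)
  · exact hij hxj
  · exact hij (hxj.mono h.le le_rfl)

lemma UnseparatedTrans.blockIndex_eq (hAB : UnseparatedTrans A B) {i j : Fin r}
    (hij : ¬ Separates A B i j) (hji : ¬ Separates A B j i) :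
    blockIndex A B i = blockIndex A B j :=
  (hAB.blockIndex_le hji).antisymm (hAB.blockIndex_le hij)

/-- Within a block, the copies of the pattern occur in increasing order if the block reads
`A…AB…B` and in decreasing order if it reads `B…BA…A`. -/
def blowUpLevel (A B : Fin r ↪o ℕ) (x : Fin k) (l : Fin r) : Fin k :=
  if A l < B l then x else x.rev

/-- The rank of the `l`-th vertex of the `x`-th edge in a `k`-fold blow-up of the pattern `(A, B)`,
whose vertices are ordered lexicographically by block, level in the block and position. -/
noncomputable def blowUpRank (A B : Fin r ↪o ℕ) (x : Fin k) (l : Fin r) : ℕ :=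
  (blockIndex A B l * k + blowUpLevel A B x l) * r + l

lemma mul_add_lt_mul_add {p q r l m : ℕ} (hpq : p < q) (hl : l < r) : p * r + l < q * r + m :=
  calc p * r + l < (p + 1) * r := by rw [Nat.succ_mul]; gcongr
    _ ≤ q * r := Nat.mul_le_mul_right r hpq
    _ ≤ q * r + m := Nat.le_add_right _ _

lemma blowUpRank_lt_of_blockIndex_lt {x y : Fin k} {l m : Fin r}
    (h : blockIndex A B l < blockIndex A B m) : blowUpRank A B x l < blowUpRank A B y m :=
  mul_add_lt_mul_add (mul_add_lt_mul_add h (Fin.is_lt _)) l.is_lt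

lemma blowUpRank_lt_of_blowUpLevel_lt {x y : Fin k} {l m : Fin r}
    (hlm : blockIndex A B l = blockIndex A B m)
    (h : blowUpLevel A B x l < blowUpLevel A B y m) :
    blowUpRank A B x l < blowUpRank A B y m :=
  mul_add_lt_mul_add (by rw [hlm]; exact Nat.add_lt_add_left h _) l.is_lt

lemma blowUpRank_lt (x : Fin k) (l : Fin r) : blowUpRank A B x l < r * k * r := by
  have h : blockIndex A B l * k + blowUpLevel A B x l < r * k := by
    simpa only [add_zero] using
      mul_add_lt_mul_add (m := 0) (blockIndex_lt A B l) (blowUpLevel A B x l).is_lt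
  simpa only [blowUpRank, add_zero] using mul_add_lt_mul_add (m := 0) h l.is_lt

lemma UnseparatedTrans.blowUpRank_strictMono (hAB : UnseparatedTrans A B)
    (hne : ∀ l m, A l ≠ B m) (x : Fin k) : StrictMono (blowUpRank A B x) := by
  intro l m hlm
  by_cases h : Separates A B l m
  · exact blowUpRank_lt_of_blockIndex_lt h.blockIndex_lt
  · have h' : ¬ Separates A B m l := fun h' ↦ h'.lt.asymm hlm
    have hlevel : blowUpLevel A B x l = blowUpLevel A B x m := by
      simp only [blowUpLevel, (lt_iff_lt_of_not_separates hne h h').1]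
    rw [blowUpRank, blowUpRank, hAB.blockIndex_eq h h', hlevel]
    gcongr
    exact hlm

lemma UnseparatedTrans.blowUpRank_lt_blowUpRank (hAB : UnseparatedTrans A B)
    (hne : ∀ l m, A l ≠ B m) {x y : Fin k} (hxy : x < y) (l m : Fin r) :
    (A l < B m → blowUpRank A B x l < blowUpRank A B y m) ∧
      (B m < A l → blowUpRank A B y m < blowUpRank A B x l) := by
  by_cases hlm : Separates A B l m
  · exact ⟨fun _ ↦ blowUpRank_lt_of_blockIndex_lt hlm.blockIndex_lt,
      fun h ↦ absurd h hlm.1.asymm⟩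
  by_cases hml : Separates A B m l
  · exact ⟨fun h ↦ absurd h hml.2.asymm,
      fun _ ↦ blowUpRank_lt_of_blockIndex_lt hml.blockIndex_lt⟩
  obtain ⟨hsign, hsign'⟩ := lt_iff_lt_of_not_separates hne hlm hml
  have hblock := hAB.blockIndex_eq hlm hml
  refine ⟨fun h ↦ blowUpRank_lt_of_blowUpLevel_lt hblock ?_,
    fun h ↦ blowUpRank_lt_of_blowUpLevel_lt hblock.symm ?_⟩
  · rw [hsign'] at h
    rwa [blowUpLevel, blowUpLevel, if_pos h, if_pos (hsign.2 h)]
  · have hm : ¬ A m < B m := fun hm ↦ h.asymm (hsign'.2 hm)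
    rwa [blowUpLevel, blowUpLevel, if_neg hm, if_neg (hsign.not.2 hm), Fin.rev_lt_rev]

lemma sameOrder_of_imp (hne : ∀ l m, A l ≠ B m)
    (h : ∀ l m, (A l < B m → a l < b m) ∧ (B m < A l → b m < a l)) : SameOrder a b A B := by
  intro l m
  have := h l m
  have := hne l m
  lia

lemma UnseparatedTrans.exists_blowUp (hAB : UnseparatedTrans A B) (hne : ∀ l m, A l ≠ B m)
    (k : ℕ) : ∃ p : Fin k → Fin r ↪o ℕ, (∀ x l, p x l < r * k * r) ∧
      ∀ x y, x < y → SameOrder (p x) (p y) A B :=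
  ⟨fun x ↦ OrderEmbedding.ofStrictMono _ (hAB.blowUpRank_strictMono hne x), blowUpRank_lt,
    fun _ _ hxy ↦ sameOrder_of_imp hne (hAB.blowUpRank_lt_blowUpRank hne hxy)⟩

variable {ι : Type*} [LinearOrder ι]

lemma EnumeratesPattern.isClique_image (hP : EnumeratesPattern P A B) {T : Finset ι}
    {c : ι → Fin r ↪o ℕ} (hc : ∀ x ∈ T, ∀ y ∈ T, x < y → SameOrder (c x) (c y) A B) :
    IsClique r {P} (T.image fun x ↦ univ.image (c x)) := by
  have hpair : ∀ x ∈ T, ∀ y ∈ T, x < y →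
      Disjoint (univ.image (c x)) (univ.image (c y)) ∧
        FormsPattern r (univ.image (c x)) (univ.image (c y)) P := by
    intro x hx y hy hxy
    have h := hc x hx y hy hxy
    refine ⟨?_, hP.formsPattern h⟩
    simp only [disjoint_left, mem_image, mem_univ, true_and, not_exists, forall_exists_index,
      forall_apply_eq_imp_iff]
    exact fun l m ↦ ((h.ne_iff l m).2 (hP.ne l m)).symm
  have hpair' : ∀ e ∈ T.image (fun x ↦ univ.image (c x)),
      ∀ f ∈ T.image (fun x ↦ univ.image (c x)), e ≠ f → Disjoint e f ∧ FormsPattern r e f P := by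
    simp only [mem_image, forall_exists_index, and_imp, forall_apply_eq_imp_iff₂]
    intro x hx y hy hne
    rcases lt_trichotomy x y with h | rfl | h
    · exact hpair x hx y hy h
    · exact absurd rfl hne
    · obtain ⟨hdisj, hforms⟩ := hpair y hy x hx h
      exact ⟨hdisj.symm, hforms.symm⟩
  refine ⟨?_, fun e he f hf hef ↦ (hpair' e he f hf hef).1,
    fun e he f hf hef ↦ ⟨P, rfl, (hpair' e he f hf hef).2⟩⟩
  simp only [mem_image, forall_exists_index, and_imp, forall_apply_eq_imp_iff₂]
  exact fun x _ ↦ by rw [card_image_of_injective _ (c x).injective, card_fin]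

lemma EnumeratesPattern.card_image (hP : EnumeratesPattern P A B) (hr : 0 < r) {T : Finset ι}
    {c : ι → Fin r ↪o ℕ} (hc : ∀ x ∈ T, ∀ y ∈ T, x < y → SameOrder (c x) (c y) A B) :
    #(T.image fun x ↦ univ.image (c x)) = #T := by
  have hne : ∀ x ∈ T, ∀ y ∈ T, x < y → univ.image (c x) ≠ univ.image (c y) := by
    intro x hx y hy hxy h
    obtain ⟨m, -, hm⟩ := mem_image.1 (h ▸ mem_image_of_mem (c x) (mem_univ (⟨0, hr⟩ : Fin r)))
    exact ((hc x hx y hy hxy).ne_iff _ m).2 (hP.ne _ m) hm.symm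
  refine card_image_of_injOn fun x hx y hy hxy ↦ ?_
  rcases lt_trichotomy x y with h | h | h
  · exact absurd hxy (hne x hx y hy h)
  · exact h
  · exact absurd hxy.symm (hne y hy x hx h)

lemma EnumeratesPattern.collectable_iff (hP : EnumeratesPattern P A B) (hr : 0 < r) :
    Collectable r P ↔ UnseparatedTrans A B := by
  refine ⟨unseparatedTrans_of_collectable hP, fun hAB k ↦ ?_⟩
  obtain ⟨p, -, hp⟩ := hAB.exists_blowUp hP.ne k
  have hp' : ∀ x ∈ (univ : Finset (Fin k)), ∀ y ∈ univ, x < y → SameOrder (p x) (p y) A B :=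
    fun x _ y _ ↦ hp x y
  exact ⟨_, hP.isClique_image hp', (hP.card_image hr hp').trans (card_fin k)⟩

end BlowUp

/-! ### Words and compositions -/

section Words

variable {r : ℕ} {P : Finset (Finset ℕ)} {A B : Fin r ↪o ℕ}

lemma mem_iff_le_card_of_initial {N : ℕ} {S : Finset ℕ} (hS : S ⊆ Icc 1 N)
    (h : ∀ x ∈ S, ∀ y ∈ Icc 1 N, y ∉ S → x < y) {x : ℕ} (hx : x ∈ Icc 1 N) :
    x ∈ S ↔ x ≤ #S := by
  rw [mem_Icc] at hx
  constructor <;> intro hxS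
  · have hsub : Icc 1 x ⊆ S := fun y hy ↦ by
      rw [mem_Icc] at hy
      by_contra hyS
      exact (h x hxS y (mem_Icc.2 ⟨hy.1, hy.2.trans hx.2⟩) hyS).not_ge hy.2
    simpa only [Nat.card_Icc, Nat.add_sub_cancel] using card_le_card hsub
  · by_contra hxS'
    have hsub : S ⊆ Ico 1 x := fun y hy ↦
      mem_Ico.2 ⟨(mem_Icc.1 (hS hy)).1, h y hy x (mem_Icc.2 hx) hxS'⟩
    have := card_le_card hsub
    rw [Nat.card_Ico] at this
    lia

namespace EnumeratesPattern

lemma mem_Icc_left (hP : EnumeratesPattern P A B) (l : Fin r) : A l ∈ Icc 1 (2 * r) :=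
  hP.union_eq ▸ mem_union_left _ (mem_image_of_mem A (mem_univ l))

lemma le_add_iff (hP : EnumeratesPattern P A B) {a b : ℕ} (ha : a ≤ r) (hb : b ≤ r)
    (hAB : ∀ l m : Fin r, l < a → b ≤ m → A l < B m)
    (hBA : ∀ l m : Fin r, a ≤ l → m < b → B m < A l) (l : Fin r) :
    (A l ≤ a + b ↔ l < a) ∧ (B l ≤ a + b ↔ l < b) := by
  set S := ({i : Fin r | i < a} : Finset (Fin r)).image A ∪
    ({i : Fin r | i < b} : Finset (Fin r)).image B with hS
  have hcard : #S = a + b := by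
    rw [hS, card_union_of_disjoint, card_image_of_injective _ A.injective,
      card_image_of_injective _ B.injective, Fin.card_filter_val_lt, Fin.card_filter_val_lt,
      min_eq_right ha, min_eq_right hb]
    simp only [disjoint_left, mem_image, not_exists, not_and, forall_exists_index, and_imp,
      forall_apply_eq_imp_iff₂]
    exact fun l _ m _ ↦ (hP.ne l m).symm
  have hA : ∀ l, A l ∈ S ↔ l < a := fun l ↦ by
    simp [hS, fun m ↦ (hP.ne l m).symm]
  have hB : ∀ m, B m ∈ S ↔ m < b := fun m ↦ by
    simp [hS, fun l ↦ hP.ne l m]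
  have hsub : S ⊆ Icc 1 (2 * r) := by
    rw [← hP.union_eq]
    exact union_subset_union (image_subset_image (subset_univ _))
      (image_subset_image (subset_univ _))
  have hinit : ∀ x ∈ S, ∀ y ∈ Icc 1 (2 * r), y ∉ S → x < y := by
    rw [← hP.union_eq]
    intro x hx y hy hyS
    have hx' := hP.union_eq ▸ hsub hx
    simp only [mem_union, mem_image, mem_univ, true_and] at hx' hy
    obtain ⟨l, rfl⟩ | ⟨l, rfl⟩ := hx' <;> obtain ⟨m, rfl⟩ | ⟨m, rfl⟩ := hy <;>
      simp only [hA, hB, not_lt] at hx hyS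
    · exact A.strictMono (hx.trans_le hyS)
    · exact hAB l m hx hyS
    · exact hBA m l hyS hx
    · exact B.strictMono (hx.trans_le hyS)
  rw [← hcard, ← mem_iff_le_card_of_initial hsub hinit (hP.mem_Icc_left l),
    ← mem_iff_le_card_of_initial hsub hinit (hP.symm.mem_Icc_left l)]
  exact ⟨hA l, hB l⟩

end EnumeratesPattern

/-- The pattern `(A, B)` can be cut before position `a`: every position before `a` is separated
from every other one. -/
def IsCut (A B : Fin r ↪o ℕ) (a : ℕ) : Prop :=
  ∀ m l : Fin r, m < a → a ≤ l → Separates A B m l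

lemma separates_comm {i j : Fin r} : Separates A B i j ↔ Separates B A i j :=
  and_comm

lemma IsCut.swap {a : ℕ} (h : IsCut A B a) : IsCut B A a :=
  fun m l hm hl ↦ separates_comm.1 (h m l hm hl)

lemma UnseparatedTrans.exists_isCut (hAB : UnseparatedTrans A B) {m l : Fin r}
    (h : Separates A B m l) : ∃ c : ℕ, m < c ∧ c ≤ l ∧ IsCut A B c := by
  obtain ⟨l', hl', hmin⟩ := WellFounded.has_min (wellFounded_lt (α := Fin r))
    {x | Separates A B m x} ⟨l, h⟩
  refine ⟨l', hl'.lt, not_lt.1 fun hlt ↦ hmin l h hlt, fun m' x hm' hx ↦ ?_⟩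
  suffices hpred : ∀ y : Fin r, y < l' → Separates A B y l' from (hpred m' hm').mono le_rfl hx
  intro y hy
  rcases le_or_gt y m with hym | hym
  · exact hl'.mono hym le_rfl
  · by_contra hyl
    exact hAB m y l' hym hy (fun h' ↦ hmin y h' hy) hyl hl'

/-- Whether the pattern `P` has the letter `A` in position `j`, counting from `0`. -/
noncomputable def patternLetter (P : Finset (Finset ℕ)) (j : ℕ) : Bool :=
  decide (∃ e ∈ P, 1 ∈ e ∧ j + 1 ∈ e)

namespace EnumeratesPattern

lemma patternLetter_eq_true_iff (hP : EnumeratesPattern P A B) (h1 : 1 ∈ univ.image A) {j : ℕ} :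
    patternLetter P j = true ↔ j + 1 ∈ univ.image A := by
  have h1B : 1 ∉ univ.image B := fun h ↦ by
    obtain ⟨l, -, hl⟩ := mem_image.1 h1
    obtain ⟨m, -, hm⟩ := mem_image.1 h
    exact hP.ne l m (hl.trans hm.symm)
  rw [patternLetter, decide_eq_true_iff, hP.eq_pair]
  simp only [mem_insert, mem_singleton, exists_eq_or_imp, exists_eq_left, h1, h1B, true_and,
    false_and, or_false]

lemma patternLetter_left (hP : EnumeratesPattern P A B) (h1 : 1 ∈ univ.image A) {j : ℕ}
    {l : Fin r} (hl : A l = j + 1) : patternLetter P j = true :=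
  (hP.patternLetter_eq_true_iff h1).2 (hl ▸ mem_image_of_mem A (mem_univ l))

lemma patternLetter_right (hP : EnumeratesPattern P A B) (h1 : 1 ∈ univ.image A) {j : ℕ}
    {l : Fin r} (hl : B l = j + 1) : patternLetter P j = false := by
  rw [← Bool.not_eq_true, hP.patternLetter_eq_true_iff h1]
  intro h
  obtain ⟨m, -, hm⟩ := mem_image.1 h
  exact hP.ne m l (hm.trans hl.symm)

lemma exists_eq_of_isCut (hP : EnumeratesPattern P A B) {a t : ℕ} (ha : IsCut A B a)
    (hc : IsCut A B (a + t)) (har : a + t ≤ r)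
    (hlt : ∀ l m : Fin r, a ≤ l → l < a + t → a ≤ m → m < a + t → A l < B m) (j : ℕ) :
    (2 * a ≤ j → j < 2 * a + t → ∃ l, A l = j + 1) ∧
      (2 * a + t ≤ j → j < 2 * a + 2 * t → ∃ l, B l = j + 1) := by
  have hstart := hP.le_add_iff (a := a) (b := a) (by lia) (by lia)
    (fun l m hl hm ↦ (ha l m hl hm).1) (fun l m hl hm ↦ (ha m l hm hl).2)
  have hend := hP.le_add_iff har har
    (fun l m hl hm ↦ (hc l m hl hm).1) (fun l m hl hm ↦ (hc m l hm hl).2)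
  have hmid := hP.le_add_iff (a := a + t) (b := a) har (by lia)
    (fun l m hl hm ↦ by
      rcases lt_or_ge (l : ℕ) a with hla | hla
      · exact (ha l m hla hm).1
      rcases lt_or_ge (m : ℕ) (a + t) with hmc | hmc
      · exact hlt l m hla hl hm hmc
      · exact (hc l m hl hmc).1)
    (fun l m hl hm ↦ (ha m l hm (by lia)).2)
  have hj : j + 1 ∈ Icc 1 (2 * r) → (∃ l, A l = j + 1) ∨ ∃ l, B l = j + 1 := fun h ↦ by
    simpa only [mem_union, mem_image, mem_univ, true_and] using hP.union_eq.symm.subset h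
  refine ⟨fun h2a hjt ↦ (hj (mem_Icc.2 (by lia))).resolve_right ?_,
    fun h2a hjt ↦ (hj (mem_Icc.2 (by lia))).resolve_left ?_⟩
  · rintro ⟨l, hl⟩
    have := hstart l
    have := hmid l
    lia
  · rintro ⟨l, hl⟩
    have := hend l
    have := hmid l
    lia

end EnumeratesPattern

lemma map_range'_eq_replicate {w : ℕ → Bool} {s t : ℕ} {b : Bool}
    (h : ∀ j, s ≤ j → j < s + t → w j = b) : (List.range' s t).map w = List.replicate t b := by
  refine List.eq_replicate_iff.2 ⟨by simp, fun x hx ↦ ?_⟩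
  obtain ⟨j, hj, rfl⟩ := List.mem_map.1 hx
  exact h j (List.mem_range'_1.1 hj).1 (List.mem_range'_1.1 hj).2

lemma EnumeratesPattern.map_patternLetter_eq (hP : EnumeratesPattern P A B)
    (h1 : 1 ∈ univ.image A) (hAB : UnseparatedTrans A B) {a t : ℕ} (ha : IsCut A B a)
    (hc : IsCut A B (a + t)) (ht : 0 < t) (har : a + t ≤ r)
    (hmin : ∀ c, a < c → c < a + t → ¬ IsCut A B c) :
    ∃ b, (List.range' (2 * a) (2 * t)).map (patternLetter P) =
      List.replicate t b ++ List.replicate t !b := by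
  have hunsep : ∀ l m : Fin r, a ≤ l → m < a + t → ¬ Separates A B l m := fun l m hl hm h ↦ by
    obtain ⟨c, hlc, hcm, hcut⟩ := hAB.exists_isCut h
    exact hmin c (by lia) (by lia) hcut
  have hsign : ∀ l m i : Fin r, a ≤ l → l < a + t → a ≤ m → m < a + t → a ≤ i → i < a + t →
      (A l < B m ↔ A i < B i) := fun l m i hl hl' hm hm' hi hi' ↦
    (lt_iff_lt_of_not_separates hP.ne (hunsep l m hl hm') (hunsep m l hm hl')).2.trans
      (lt_iff_lt_of_not_separates hP.ne (hunsep m i hm hi') (hunsep i m hi hm')).1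
  have hsplit : List.range' (2 * a) (2 * t) =
      List.range' (2 * a) t ++ List.range' (2 * a + t) t := by
    rw [two_mul t, ← List.range'_append_1]
  rw [hsplit]
  simp only [List.map_append]
  let i : Fin r := ⟨a, by lia⟩
  by_cases hi : A i < B i
  · have hblock := hP.exists_eq_of_isCut ha hc har fun l m hl hl' hm hm' ↦
      (hsign l m i hl hl' hm hm' le_rfl (by lia)).2 hi
    refine ⟨true, congrArg₂ _ ?_ ?_⟩ <;> refine map_range'_eq_replicate fun j hj hj' ↦ ?_
    · obtain ⟨l, hl⟩ := (hblock j).1 hj hj'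
      exact hP.patternLetter_left h1 hl
    · obtain ⟨l, hl⟩ := (hblock j).2 hj (by lia)
      exact hP.patternLetter_right h1 hl
  · have hblock := hP.symm.exists_eq_of_isCut ha.swap hc.swap har fun l m hl hl' hm hm' ↦
      lt_of_le_of_ne (not_lt.1 fun h ↦ hi ((hsign m l i hm hm' hl hl' le_rfl (by lia)).1 h))
        (hP.symm.ne l m)
    refine ⟨false, congrArg₂ _ ?_ ?_⟩ <;> refine map_range'_eq_replicate fun j hj hj' ↦ ?_
    · obtain ⟨l, hl⟩ := (hblock j).1 hj hj'
      exact hP.patternLetter_right h1 hl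
    · obtain ⟨l, hl⟩ := (hblock j).2 hj (by lia)
      exact hP.patternLetter_left h1 hl

lemma IsBlockSplitting.cons {w : List Bool} {lam : List ℕ} (h : IsBlockSplitting w lam) {t : ℕ}
    (ht : 1 ≤ t) (b : Bool) :
    IsBlockSplitting (List.replicate t b ++ List.replicate t (!b) ++ w) (t :: lam) := by
  obtain ⟨hlam, bs, hlength, rfl⟩ := h
  exact ⟨List.forall_mem_cons.2 ⟨ht, hlam⟩, b :: bs, by simp [hlength], by simp⟩

lemma UnseparatedTrans.exists_forall_isBlockSplitting (hAB : UnseparatedTrans A B) {a : ℕ}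
    (har : a ≤ r) (ha : IsCut A B a) : ∃ lam, ∀ P' (A' B' : Fin r ↪o ℕ),
      EnumeratesPattern P' A' B' → 1 ∈ univ.image A' →
      (∀ i j, Separates A' B' i j ↔ Separates A B i j) →
      IsBlockSplitting ((List.range' (2 * a) (2 * (r - a))).map (patternLetter P')) lam := by
  induction h : r - a using Nat.strong_induction_on generalizing a with | _ d ih => ?_
  rcases har.eq_or_lt with rfl | har'
  · obtain rfl : d = 0 := by lia
    exact ⟨[], fun P' _ _ _ _ _ ↦ ⟨by simp, [], rfl, rfl⟩⟩
  have hcut : ∃ c, a < c ∧ IsCut A B c :=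
    ⟨r, har', fun m l _ hl ↦ absurd l.is_lt hl.not_gt⟩
  obtain ⟨t, ht⟩ := Nat.exists_eq_add_of_lt (Nat.find_spec hcut).1
  have hfind : Nat.find hcut ≤ r :=
    Nat.find_min' hcut ⟨har', fun m l _ hl ↦ absurd l.is_lt hl.not_gt⟩
  have hmin : ∀ c, a < c → c < a + (t + 1) → ¬ IsCut A B c := fun c hac hc hcut' ↦
    Nat.find_min hcut (m := c) (by lia) ⟨hac, hcut'⟩
  have hc : IsCut A B (a + (t + 1)) := ht ▸ (Nat.find_spec hcut).2
  obtain ⟨lam, hlam⟩ := ih (r - (a + (t + 1))) (by lia) (a := a + (t + 1)) (by lia) hc rfl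
  refine ⟨(t + 1) :: lam, fun P' A' B' hP' h1 hsep ↦ ?_⟩
  have hcut_iff : ∀ c, IsCut A' B' c ↔ IsCut A B c := fun c ↦ by simp only [IsCut, hsep]
  have hAB' : UnseparatedTrans A' B' := by simpa only [UnseparatedTrans, hsep] using hAB
  obtain ⟨b, hb⟩ := hP'.map_patternLetter_eq h1 hAB' ((hcut_iff a).2 ha) ((hcut_iff _).2 hc)
    t.succ_pos (by lia) fun c hac hc ↦ (hcut_iff c).not.2 (hmin c hac hc)
  have hsplit : List.range' (2 * a) (2 * d) = List.range' (2 * a) (2 * (t + 1)) ++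
      List.range' (2 * (a + (t + 1))) (2 * (r - (a + (t + 1)))) := by
    rw [mul_add 2 a, List.range'_append_1]
    congr 1
    lia
  rw [hsplit, List.map_append, hb]
  exact (hlam P' A' B' hP' h1 hsep).cons t.succ_pos b

theorem UnseparatedTrans.exists_forall_hasComposition (hAB : UnseparatedTrans A B) :
    ∃ lam, ∀ P' (A' B' : Fin r ↪o ℕ), EnumeratesPattern P' A' B' → 1 ∈ univ.image A' →
      (∀ i j, Separates A' B' i j ↔ Separates A B i j) → HasComposition r P' lam := by
  obtain ⟨lam, hlam⟩ := hAB.exists_forall_isBlockSplitting (Nat.zero_le r)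
    fun m l hm _ ↦ absurd hm (Nat.not_lt_zero m)
  refine ⟨lam, fun P' A' B' hP' h1 hsep ↦ ?_⟩
  have hword : patternWord r P' =
      (List.range' (2 * 0) (2 * (r - 0))).map (patternLetter P') := by
    rw [mul_zero, Nat.sub_zero, ← List.range_eq_range']
    rfl
  rw [HasComposition, hword]
  exact hlam P' A' B' hP' h1 hsep

theorem Mismatch.exists_separates_not_iff {Q : Finset (Finset ℕ)} {A' B' : Fin r ↪o ℕ}
    (hPQ : Mismatch r P Q) (hr : 0 < r) (hP : EnumeratesPattern P A B) (hA : 1 ∈ univ.image A)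
    (hQ : EnumeratesPattern Q A' B') (hA' : 1 ∈ univ.image A') :
    ∃ i j, ¬ (Separates A B i j ↔ Separates A' B' i j) := by
  by_contra! h
  have hsep : ∀ i j, Separates A' B' i j ↔ Separates A B i j := fun i j ↦ (h i j).symm
  have hcoll : Collectable r P ↔ Collectable r Q := by
    rw [hP.collectable_iff hr, hQ.collectable_iff hr]
    simp only [UnseparatedTrans, hsep]
  rcases hPQ.2 with ⟨hcP, hcQ⟩ | ⟨hcP, hcQ⟩ | ⟨hcP, -, hlam⟩
  · exact hcQ (hcoll.1 hcP)
  · exact hcP (hcoll.2 hcQ)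
  · obtain ⟨lam, h⟩ := ((hP.collectable_iff hr).1 hcP).exists_forall_hasComposition
    exact hlam ⟨lam, h P A B hP hA fun _ _ ↦ Iff.rfl, h Q A' B' hQ hA' hsep⟩

end Words

/-! ### Cliques are determined by their columns -/

section Determination

variable {ι α : Type*} [LinearOrder α]

lemma eq_of_range_eq_of_lt_iff_lt [WellFoundedLT α] {u u' : ι → α} (hu : Function.Injective u)
    (hrange : Set.range u = Set.range u') (h : ∀ x y, u x < u y ↔ u' x < u' y) : u = u' := by
  let _ := LinearOrder.lift' u hu
  have : WellFoundedLT ι := ⟨InvImage.wf u wellFounded_lt⟩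
  have hmono : StrictMono u := fun _ _ hxy ↦ hxy
  exact (hmono.range_inj fun x y hxy ↦ (h x y).1 hxy).1 hrange

/-- The half-open intervals `[u x, v x)` and `[u y, v y)` do not cross. -/
def NonCrossing (u v : ι → α) : Prop :=
  ∀ x y, ¬ (u x < u y ∧ u y < v x ∧ v x < v y)

lemma NonCrossing.le_of_forall_eq {u v v' : ι → α} (hcross : NonCrossing u v)
    (hu : Function.Injective u) (hv' : Function.Injective v')
    (hrange : Set.range v' ⊆ Set.range v) (huv' : ∀ x, u x < v' x) {x : ι}
    (h : ∀ y, u x < u y → v y = v' y) : v x ≤ v' x := by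
  obtain ⟨y, hy⟩ := hrange ⟨x, rfl⟩
  rcases lt_trichotomy (u y) (u x) with hyx | hyx | hyx
  · exact hy ▸ not_lt.1 fun hlt ↦ hcross y x ⟨hyx, hy ▸ huv' x, hlt⟩
  · exact hu hyx ▸ hy.le
  · exact absurd (hv' ((h y hyx).symm.trans hy)) fun hxy ↦ hyx.ne' (hxy ▸ rfl)

lemma NonCrossing.eq_of_range_eq [Finite ι] {u v v' : ι → α} (hcross : NonCrossing u v)
    (hcross' : NonCrossing u v') (hu : Function.Injective u) (hv : Function.Injective v)
    (hv' : Function.Injective v') (hrange : Set.range v = Set.range v')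
    (huv : ∀ x, u x < v x) (huv' : ∀ x, u x < v' x) : v = v' := by
  let _ := LinearOrder.lift' u hu
  funext x
  induction x using WellFoundedGT.induction with | _ x ih
  exact (hcross.le_of_forall_eq hu hv' hrange.ge huv' ih).antisymm
    (hcross'.le_of_forall_eq hu hv hrange.le huv fun y hy ↦ (ih y hy).symm)

variable {r : ℕ} {a b A B C D : Fin r ↪o ℕ} {i j : Fin r}

lemma SamePattern.ne (h : SamePattern a b A B) (hAB : ∀ l m, A l ≠ B m) (l m : Fin r) :
    a l ≠ b m := by
  rcases h with h | h
  · exact (h.ne_iff l m).2 (hAB l m)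
  · exact (h.ne_iff l m).2 (hAB m l).symm

/-- Any two members of the family `a` form the pattern `(A, B)` or the pattern `(C, D)`. -/
def IsPatternFamily (A B C D : Fin r ↪o ℕ) (a : ι → Fin r ↪o ℕ) : Prop :=
  ∀ x y, x ≠ y → SamePattern (a x) (a y) A B ∨ SamePattern (a x) (a y) C D

namespace IsPatternFamily

variable {f g : ι → Fin r ↪o ℕ}

lemma injective (hf : IsPatternFamily A B C D f) (hAB : ∀ l m, A l ≠ B m)
    (hCD : ∀ l m, C l ≠ D m) (l : Fin r) : Function.Injective (f · l) := by
  intro x y hxy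
  by_contra hne
  rcases hf x y hne with h | h
  exacts [h.ne hAB l l hxy, h.ne hCD l l hxy]

lemma lt_iff_lt (hf : IsPatternFamily A B C D f) (hAB : ∀ l m, A l ≠ B m)
    (hCD : ∀ l m, C l ≠ D m) (h : A i < B i ↔ A j < B j) (h' : C i < D i ↔ C j < D j) (x y : ι) :
    f x i < f y i ↔ f x j < f y j := by
  rcases eq_or_ne x y with rfl | hxy
  · simp only [lt_self_iff_false]
  rcases hf x y hxy with hp | hp
  exacts [(hp.lt_iff_lt_iff hAB i j).2 h, (hp.lt_iff_lt_iff hCD i j).2 h']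

lemma nonCrossing (hf : IsPatternFamily A B C D f) (hAB : ∀ l m, A l ≠ B m)
    (h : ¬ (A i < B i ↔ A j < B j)) (hij : i < j) (hns : ¬ Separates C D i j) :
    NonCrossing (f · i) (f · j) := by
  rintro x y ⟨hi, hcross, hj⟩
  have hxy : x ≠ y := fun hxy ↦ hi.ne (hxy ▸ rfl)
  rcases hf x y hxy with hp | hp
  · exact h ((hp.lt_iff_lt_iff hAB i j).1 (iff_of_true hi hj))
  · rw [← hp.separates_iff] at hns
    exact hns ⟨((f x).strictMono hij).trans hj, hcross⟩

lemma apply_eq_apply [Finite ι] (hf : IsPatternFamily A B C D f) (hg : IsPatternFamily A B C D g)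
    (hAB : ∀ l m, A l ≠ B m) (hCD : ∀ l m, C l ≠ D m) (hij : i < j) (hns : ¬ Separates C D i j)
    (hi : ∀ x, f x i = g x i) (hrange : Set.range (f · j) = Set.range (g · j)) :
    (f · j) = (g · j) := by
  have hsign : C i < D i ↔ C j < D j :=
    (lt_iff_lt_of_not_separates hCD hns fun h ↦ hij.asymm h.lt).1
  by_cases h : A i < B i ↔ A j < B j
  · refine eq_of_range_eq_of_lt_iff_lt (hf.injective hAB hCD j) hrange fun x y ↦ ?_
    rw [← hf.lt_iff_lt hAB hCD h hsign, ← hg.lt_iff_lt hAB hCD h hsign, hi, hi]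
  · have hcross : NonCrossing (f · i) (g · j) := by
      simpa only [hi] using hg.nonCrossing hAB h hij hns
    exact (hf.nonCrossing hAB h hij hns).eq_of_range_eq hcross (hf.injective hAB hCD i)
      (hf.injective hAB hCD j) (hg.injective hAB hCD j) hrange (fun x ↦ (f x).strictMono hij)
      fun x ↦ (hi x).trans_lt ((g x).strictMono hij)

theorem eq_of_range_eq [Finite ι] (hf : IsPatternFamily A B C D f)
    (hg : IsPatternFamily A B C D g) (hAB : ∀ l m, A l ≠ B m) (hCD : ∀ l m, C l ≠ D m)
    (hs : Separates A B i j) (hns : ¬ Separates C D i j) (hi : ∀ x, f x i = g x i)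
    (hrange : ∀ l, Set.range (f · l) = Set.range (g · l)) : f = g := by
  have hj : ∀ x, f x j = g x j :=
    congrFun (hf.apply_eq_apply hg hAB hCD hs.lt hns hi (hrange j))
  -- Columns `i` and `j` tell which pattern `x` and `y` form, and column `i` which comes first.
  have horder : ∀ l x y, f x l < f y l ↔ g x l < g y l := fun l x y ↦ by
    rcases eq_or_ne x y with rfl | hxy
    · simp only [lt_self_iff_false]
    have hsep : Separates (f x) (f y) i j ↔ Separates (g x) (g y) i j := by
      simp only [Separates, hi, hj]
    have hsign : (f x i < f y i ↔ f x l < f y l) ↔ (g x i < g y i ↔ g x l < g y l) := by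
      rcases hf x y hxy with hp | hp <;> rcases hg x y hxy with hp' | hp' <;>
        rw [hp.separates_iff, hp'.separates_iff] at hsep
      · rw [hp.lt_iff_lt_iff hAB, hp'.lt_iff_lt_iff hAB]
      · exact absurd (hsep.1 hs) hns
      · exact absurd (hsep.2 hs) hns
      · rw [hp.lt_iff_lt_iff hCD, hp'.lt_iff_lt_iff hCD]
    rw [hi, hi] at hsign
    tauto
  funext x
  ext l
  exact congrFun (eq_of_range_eq_of_lt_iff_lt (hf.injective hAB hCD l) (hrange l) (horder l)) x

end IsPatternFamily

end Determination

section Columns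

variable {r : ℕ} {P Q : Finset (Finset ℕ)} {Ps : Set (Finset (Finset ℕ))}
  {K K' : Finset (Finset ℕ)} {A B C D : Fin r ↪o ℕ} {i j : Fin r}

/-- The `l`-th column of a family `K` of `r`-element sets: the set of the `l`-th smallest elements
of its members. -/
def column (r : ℕ) (K : Finset (Finset ℕ)) (l : Fin r) : Finset ℕ :=
  K.image (enum r · l)

lemma IsClique.injOn_enum (hK : IsClique r Ps K) (l : Fin r) :
    Set.InjOn (enum r · l) (K : Set (Finset ℕ)) := by
  intro e he f hf hef
  by_contra hne
  exact enum_ne_enum (hK.1 e he) (hK.1 f hf) (hK.2.1 e he f hf hne) l l hef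

lemma IsClique.isPatternFamily (hK : IsClique r {P, Q} K) (hP : EnumeratesPattern P A B)
    (hQ : EnumeratesPattern Q C D) {ι : Type*} {E : ι → Finset ℕ} (hE : ∀ x, E x ∈ K)
    (hinj : Function.Injective E) : IsPatternFamily A B C D fun x ↦ enum r (E x) := by
  intro x y hxy
  obtain ⟨R, rfl | rfl, hforms⟩ := hK.2.2 _ (hE x) _ (hE y) (hinj.ne hxy)
  exacts [.inl (hP.samePattern (hK.1 _ (hE x)) (hK.1 _ (hE y)) hforms),
    .inr (hQ.samePattern (hK.1 _ (hE x)) (hK.1 _ (hE y)) hforms)]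

lemma IsClique.subset_of_column_eq (hK : IsClique r {P, Q} K) (hK' : IsClique r {P, Q} K')
    (hP : EnumeratesPattern P A B) (hQ : EnumeratesPattern Q C D) (hs : Separates A B i j)
    (hns : ¬ Separates C D i j) (h : ∀ l, column r K l = column r K' l) : K ⊆ K' := by
  have hex : ∀ e : K, ∃ e' ∈ K', enum r e' i = enum r e i := fun e ↦
    mem_image.1 ((h i).subset (mem_image_of_mem _ e.2))
  choose E hE hEi using hex
  have hEinj : Function.Injective E := fun e f hef ↦
    Subtype.ext (hK.injOn_enum i e.2 f.2 (by simp only [← hEi, hef]))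
  have hErange : Set.range E = K' := by
    refine Set.Subset.antisymm (Set.range_subset_iff.2 hE) fun e' he' ↦ ?_
    obtain ⟨e, he, hee'⟩ := mem_image.1 ((h i).symm.subset (mem_image_of_mem _ he'))
    exact ⟨⟨e, he⟩, hK'.injOn_enum i (hE _) he' ((hEi _).trans hee')⟩
  have hrange : ∀ l, Set.range (fun e : K ↦ enum r (e : Finset ℕ) l) =
      Set.range fun e : K ↦ enum r (E e) l := fun l ↦ by
    have hcol := congrArg (fun s : Finset ℕ ↦ (s : Set ℕ)) (h l)
    simp only [column, coe_image] at hcol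
    calc Set.range ((enum r · l) ∘ ((↑) : K → Finset ℕ)) = (enum r · l) '' K := by
          rw [Set.range_comp, Subtype.range_coe]
      _ = (enum r · l) '' K' := hcol
      _ = Set.range ((enum r · l) ∘ E) := by rw [Set.range_comp, hErange]
  have heq := (hK.isPatternFamily hP hQ (fun e : K ↦ e.2) Subtype.val_injective).eq_of_range_eq
    (hK'.isPatternFamily hP hQ hE hEinj) hP.ne hQ.ne hs hns (fun e ↦ (hEi e).symm) hrange
  intro e he
  have himage : univ.image (enum r e) = univ.image (enum r (E ⟨e, he⟩)) :=
    congrArg (fun a : Fin r ↪o ℕ ↦ univ.image a) (congrFun heq ⟨e, he⟩)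
  rw [image_enum (hK.1 e he), image_enum (hK'.1 _ (hE ⟨e, he⟩))] at himage
  exact himage ▸ hE ⟨e, he⟩

lemma card_cliques_le (hP : EnumeratesPattern P A B) (hQ : EnumeratesPattern Q C D)
    (hsep : ¬ (Separates A B i j ↔ Separates C D i j)) (V : Finset ℕ) (k : ℕ) :
    #{K ∈ V.powerset.powerset | IsClique r {P, Q} K ∧ #K = k} ≤ (#V).choose k ^ r := by
  have hcard : #(Fintype.piFinset fun _ : Fin r ↦ V.powersetCard k) = (#V).choose k ^ r := by
    rw [Fintype.card_piFinset_const, card_powersetCard]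
  refine hcard ▸ card_le_card_of_injOn (column r) ?_ ?_
  · intro K hK
    obtain ⟨hKV, hclique, rfl⟩ := mem_filter.1 hK
    refine mem_coe.2 (Fintype.mem_piFinset.2 fun l ↦ mem_powersetCard.2
      ⟨image_subset_iff.2 fun e he ↦ ?_, card_image_of_injOn (hclique.injOn_enum l)⟩)
    exact mem_powerset.1 (mem_powerset.1 hKV he) (enum_mem (hclique.1 e he) l)
  · intro K hK K' hK' hcol
    have hK := (mem_filter.1 hK).2.1
    have hK' := (mem_filter.1 hK').2.1
    by_cases hs : Separates A B i j
    · have hns : ¬ Separates C D i j := fun hns ↦ hsep (iff_of_true hs hns)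
      exact (hK.subset_of_column_eq hK' hP hQ hs hns (congrFun hcol)).antisymm
        (hK'.subset_of_column_eq hK hP hQ hs hns fun l ↦ (congrFun hcol l).symm)
    · have hs' : Separates C D i j := by_contra fun hs' ↦ hsep (iff_of_false hs hs')
      rw [Set.pair_comm] at hK hK'
      exact (hK.subset_of_column_eq hK' hQ hP hs' hs (congrFun hcol)).antisymm
        (hK'.subset_of_column_eq hK hQ hP hs' hs fun l ↦ (congrFun hcol l).symm)

end Columns

/-! ### The upper bound -/

section UpperBound

open Filter Topology

variable {r n k : ℕ} {P Q : Finset (Finset ℕ)} {Ps : Set (Finset (Finset ℕ))}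
  {K K' M : Finset (Finset ℕ)}

lemma IsClique.mono (hK : IsClique r Ps K) (h : K' ⊆ K) : IsClique r Ps K' :=
  ⟨fun e he ↦ hK.1 e (h he), fun e he f hf ↦ hK.2.1 e (h he) f (h hf),
    fun e he f hf ↦ hK.2.2 e (h he) f (h hf)⟩

lemma IsClique.mono_patterns {Qs : Set (Finset (Finset ℕ))} (hK : IsClique r Ps K)
    (h : Ps ⊆ Qs) : IsClique r Qs K :=
  ⟨hK.1, hK.2.1, fun e he f hf hef ↦ (hK.2.2 e he f hf hef).imp fun _ ↦ And.imp_left (@h _)⟩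

lemma bddAbove_card_cliques (r : ℕ) (Ps : Set (Finset (Finset ℕ))) (M : Finset (Finset ℕ)) :
    BddAbove {k | ∃ K ⊆ M, IsClique r Ps K ∧ #K = k} :=
  ⟨#M, fun _ ⟨_, hKM, _, hk⟩ ↦ hk ▸ card_le_card hKM⟩

lemma IsClique.card_le_zClique (hK : IsClique r Ps K) (h : K ⊆ M) : #K ≤ zClique r Ps M :=
  le_csSup (bddAbove_card_cliques r Ps M) ⟨K, h, hK, rfl⟩

lemma exists_isClique_of_le_zClique (h : k ≤ zClique r Ps M) :
    ∃ K ⊆ M, IsClique r Ps K ∧ #K = k := by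
  obtain ⟨K, hKM, hK, hcard⟩ := Nat.sSup_mem (s := {k | ∃ K ⊆ M, IsClique r Ps K ∧ #K = k})
    ⟨0, ∅, empty_subset M, by simp [IsClique], rfl⟩ (bddAbove_card_cliques r Ps M)
  obtain ⟨K', hK', hcard'⟩ := exists_subset_card_eq (h.trans_eq hcard.symm)
  exact ⟨K', hK'.trans hKM, hK.mono hK', hcard'⟩

lemma prob_le_zClique_le {A B C D : Fin r ↪o ℕ} {i j : Fin r} (hP : EnumeratesPattern P A B)
    (hQ : EnumeratesPattern Q C D) (hsep : ¬ (Separates A B i j ↔ Separates C D i j)) (n k : ℕ) :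
    prob r n (k ≤ zClique r {P, Q} ·) ≤ (r * n).choose k ^ r * inclusionProb r n k := by
  have hr : 0 < r := i.pos
  set 𝒦 : Finset (Finset (Finset ℕ)) :=
    {K ∈ (Icc 1 (r * n)).powerset.powerset | IsClique r {P, Q} K ∧ #K = k}
  have hcard : #𝒦 ≤ (r * n).choose k ^ r := by
    simpa only [Nat.card_Icc, Nat.add_sub_cancel] using
      card_cliques_le hP hQ hsep (Icc 1 (r * n)) k
  calc _ ≤ prob r n (fun M ↦ ∃ K ∈ 𝒦, K ⊆ M) := prob_mono fun M hM hk ↦ by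
        obtain ⟨K, hKM, hK, hcard⟩ := exists_isClique_of_le_zClique hk
        have hM := isPartialMatching_of_mem_matchingFamilies hr hM
        exact ⟨K, mem_filter.2 ⟨mem_powerset.2 fun e he ↦
          mem_powerset.2 (hM.subset e (hKM he)), hK, hcard⟩, hKM⟩
    _ ≤ ∑ K ∈ 𝒦, prob r n (K ⊆ ·) := prob_exists_le 𝒦 fun K M ↦ K ⊆ M
    _ ≤ #𝒦 • inclusionProb r n k := sum_le_card_nsmul _ _ _ fun K hK ↦
        (prob_subset_le hr K).trans_eq (by rw [(mem_filter.1 hK).2.2])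
    _ ≤ (r * n).choose k ^ r * inclusionProb r n k := by
        rw [nsmul_eq_mul]
        gcongr
        · exact inclusionProb_nonneg k
        · exact_mod_cast hcard

lemma choose_le_exp_mul_div_pow (N : ℕ) (hk : 0 < k) :
    (N.choose k : ℝ) ≤ (Real.exp 1 * N / k) ^ k := by
  have hexp : (k : ℝ) ^ k / k.factorial ≤ Real.exp 1 ^ k := by
    simpa only [Real.exp_one_pow] using Real.pow_div_factorial_le_exp (k : ℝ) k.cast_nonneg k
  calc (N.choose k : ℝ) ≤ N ^ k / k.factorial := Nat.choose_le_pow_div k N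
    _ = (N / k) ^ k * (k ^ k / k.factorial) := by
        rw [div_pow]
        field_simp
    _ ≤ (N / k) ^ k * Real.exp 1 ^ k := by gcongr
    _ = _ := by rw [← mul_pow]; ring

lemma inclusionProb_le (hr : 0 < r) (hk : 0 < k) (hkn : 2 * k ≤ n) :
    inclusionProb r n k ≤ (r.factorial * n / (r * n / 2) ^ r) ^ k := by
  have hn : (0 : ℝ) < n := by exact_mod_cast (show 0 < n by lia)
  have hdesc : ((r * n / 2) ^ r : ℝ) ^ k ≤ (r * n).descFactorial (r * k) := by
    have hpow := Nat.pow_sub_le_descFactorial (r * n) (r * k)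
    calc ((r * n / 2) ^ r : ℝ) ^ k ≤ ((r * n + 1 - r * k : ℕ) : ℝ) ^ (r * k) := by
          rw [← pow_mul]
          have : r * (2 * k) ≤ r * n := Nat.mul_le_mul_left r hkn
          gcongr
          rw [div_le_iff₀ two_pos]
          exact_mod_cast (show r * n ≤ (r * n + 1 - r * k) * 2 by lia)
      _ ≤ _ := by exact_mod_cast hpow
  rw [inclusionProb_eq hr (by lia), div_pow, mul_pow]
  gcongr
  exact_mod_cast n.descFactorial_le_pow k

lemma choose_pow_mul_inclusionProb_le (hr : 0 < r) (hk : 0 < k) (hkn : 2 * k ≤ n) :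
    ((r * n).choose k : ℝ) ^ r * inclusionProb r n k ≤
      ((2 * Real.exp 1) ^ r * r.factorial * (n / k ^ r)) ^ k := by
  have hn : (0 : ℝ) < n := by exact_mod_cast (show 0 < n by lia)
  calc _ ≤ ((Real.exp 1 * (r * n : ℕ) / k) ^ k) ^ r *
        (r.factorial * n / (r * n / 2) ^ r) ^ k := by
        gcongr
        · exact inclusionProb_nonneg k
        · exact choose_le_exp_mul_div_pow _ hk
        · exact inclusionProb_le hr hk hkn
    _ = _ := by
        rw [pow_right_comm, ← mul_pow]
        push_cast
        congr 1
        simp only [div_pow, mul_pow]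
        field_simp

lemma tendsto_natCast_rpow_one_div_atTop (hr : 0 < r) :
    Tendsto (fun n : ℕ ↦ (n : ℝ) ^ (1 / r : ℝ)) atTop atTop :=
  (tendsto_rpow_atTop (by positivity)).comp tendsto_natCast_atTop_atTop

lemma natCast_rpow_one_div_pow (hr : 0 < r) (n : ℕ) : ((n : ℝ) ^ (1 / r : ℝ)) ^ r = n := by
  rw [one_div, Real.rpow_inv_natCast_pow n.cast_nonneg hr.ne']

lemma eventually_two_mul_ceil_rpow_le (hr : 2 ≤ r) {c : ℝ} (hc : 0 < c) :
    ∀ᶠ n : ℕ in atTop, 2 * ⌈c * (n : ℝ) ^ (1 / r : ℝ)⌉₊ ≤ n := by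
  have hlim := tendsto_natCast_rpow_one_div_atTop (r := r) (by lia)
  filter_upwards [hlim.eventually_ge_atTop (2 * (c + 1))] with n hn
  set x := (n : ℝ) ^ (1 / r : ℝ)
  have hx : x ^ 2 ≤ n := natCast_rpow_one_div_pow (r := r) (by lia) n ▸
    pow_le_pow_right₀ (by linarith) hr
  have hceil : (⌈c * x⌉₊ : ℝ) < c * x + 1 := Nat.ceil_lt_add_one (by positivity)
  have : (2 * ⌈c * x⌉₊ : ℝ) ≤ n := by nlinarith
  exact_mod_cast this

theorem Mismatch.exists_aas_zClique_le (hPQ : Mismatch r P Q) (hr : 2 ≤ r)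
    (hP : IsOrderedMatching r 2 P) (hQ : IsOrderedMatching r 2 Q) :
    ∃ c : ℝ, 0 < c ∧ AAS r fun n M ↦ (zClique r {P, Q} M : ℝ) ≤ c * (n : ℝ) ^ (1 / r : ℝ) := by
  have hr0 : 0 < r := by lia
  obtain ⟨A, B, hAB, hA⟩ := exists_enumeratesPattern hr0 hP
  obtain ⟨C, D, hCD, hC⟩ := exists_enumeratesPattern hr0 hQ
  obtain ⟨i, j, hsep⟩ := hPQ.exists_separates_not_iff hr0 hAB hA hCD hC
  set b : ℝ := (2 * Real.exp 1) ^ r * r.factorial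
  have : 0 < b := by positivity
  set c : ℝ := (2 * b) ^ (1 / r : ℝ)
  have hc : 0 < c := by positivity
  have hcr : c ^ r = 2 * b := by
    simp only [c, one_div, Real.rpow_inv_natCast_pow (by positivity : 0 ≤ 2 * b) hr0.ne']
  set k : ℕ → ℕ := fun n ↦ ⌈c * (n : ℝ) ^ (1 / r : ℝ)⌉₊
  have hlim := (tendsto_natCast_rpow_one_div_atTop hr0).const_mul_atTop hc
  have hk : Tendsto k atTop atTop := tendsto_nat_ceil_atTop.comp hlim
  refine ⟨c, hc, aas_of_prob_not_le hr0 (u := fun n ↦ (1 / 2) ^ k n)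
    ((tendsto_pow_atTop_nhds_zero_of_lt_one (by norm_num) (by norm_num)).comp hk) ?_⟩
  filter_upwards [eventually_two_mul_ceil_rpow_le hr hc, hk.eventually_gt_atTop 0] with n hkn hpos
  calc _ ≤ prob r n (k n ≤ zClique r {P, Q} ·) := prob_mono fun M _ hM ↦
        Nat.ceil_le.2 (not_le.1 hM).le
    _ ≤ (r * n).choose (k n) ^ r * inclusionProb r n (k n) := prob_le_zClique_le hAB hCD hsep n _
    _ ≤ (b * (n / k n ^ r)) ^ k n := choose_pow_mul_inclusionProb_le hr0 hpos hkn
    _ ≤ (1 / 2) ^ k n := by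
        have hkr : 2 * b * n ≤ (k n : ℝ) ^ r := by
          rw [← hcr, ← natCast_rpow_one_div_pow hr0 n, ← mul_pow]
          gcongr
          exact Nat.le_ceil _
        gcongr
        rw [mul_div_assoc', div_le_iff₀ (by positivity)]
        linarith

end UpperBound

/-! ### Factorial moments of the number of edges in a box -/

section Boxes

open Function

variable {r n : ℕ} {κ κ' : Type*} {U V : Fin r → Finset ℕ}
  {M : Finset (Finset ℕ)}

/-- The number of transversals of `U 0, …, U (r - 1)` that are edges of `M`. -/
noncomputable def transversalCount (U : Fin r → Finset ℕ) (M : Finset (Finset ℕ)) : ℕ :=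
  #{v ∈ Fintype.piFinset U | univ.image v ∈ M}

/-- The transversals listed by a family of enumerations of vertices of `U 0, …, U (r - 1)`; for
injective enumerations these are pairwise disjoint, so that they are the ordered matchings
indexed by `κ` of the complete `r`-partite hypergraph on `U`. -/
def transversal (g : ∀ l, κ ↪ U l) (t : κ) (l : Fin r) : ℕ := g l t

lemma transversal_mem_piFinset (g : ∀ l, κ ↪ U l) (t : κ) :
    transversal g t ∈ Fintype.piFinset U :=
  Fintype.mem_piFinset.2 fun l ↦ (g l t).2

lemma transversal_injective (hU : Pairwise (Disjoint on U)) (g : ∀ l, κ ↪ U l) :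
    Injective (uncurry (transversal g)) := by
  rintro ⟨t, l⟩ ⟨t', m⟩ (h : (g l t : ℕ) = g m t')
  obtain rfl : l = m := hU.eq (not_disjoint_iff.2 ⟨_, (g l t).2, h ▸ (g m t').2⟩)
  obtain rfl : t = t' := (g l).injective (Subtype.ext h)
  rfl

lemma eq_of_image_univ_eq_of_mem_piFinset (hU : Pairwise (Disjoint on U)) {v w : Fin r → ℕ}
    (hv : v ∈ Fintype.piFinset U) (hw : w ∈ Fintype.piFinset U)
    (h : univ.image v = univ.image w) : v = w := by
  rw [Fintype.mem_piFinset] at hv hw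
  funext l
  obtain ⟨m, -, hm⟩ := mem_image.1 (h ▸ mem_image_of_mem v (mem_univ l))
  have hlm : m = l := hU.eq (not_disjoint_iff.2 ⟨v l, hm ▸ hw m, hv l⟩)
  rw [← hm, hlm]

variable [Fintype κ] [Fintype κ']

lemma card_transversals_subset (hr : 0 < r) (hM : IsPartialMatching r (Icc 1 (r * n)) M)
    (hU : Pairwise (Disjoint on U)) :
    #{g : ∀ l, κ ↪ U l | ∀ t, univ.image (transversal g t) ∈ M} =
      (transversalCount U M).descFactorial (Fintype.card κ) := by
  set S : Finset (Fin r → ℕ) := {v ∈ Fintype.piFinset U | univ.image v ∈ M}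
  have hS : ∀ v : S, v.1 ∈ Fintype.piFinset U ∧ univ.image v.1 ∈ M := fun v ↦ mem_filter.1 v.2
  have hinj : ∀ (l : Fin r) (v w : S), v.1 l = w.1 l → v = w := by
    intro l v w h
    refine Subtype.ext (eq_of_image_univ_eq_of_mem_piFinset hU (hS v).1 (hS w).1 ?_)
    by_contra hne
    exact disjoint_left.1 (hM.disjoint _ (hS v).2 _ (hS w).2 hne)
      (mem_image_of_mem v.1 (mem_univ l)) (h ▸ mem_image_of_mem w.1 (mem_univ l))
  let e : {g : ∀ l, κ ↪ U l // ∀ t, univ.image (transversal g t) ∈ M} ≃ (κ ↪ S) :=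
    { toFun g := ⟨fun t ↦ ⟨transversal g.1 t,
          mem_filter.2 ⟨transversal_mem_piFinset g.1 t, g.2 t⟩⟩, fun t t' h ↦
        (g.1 ⟨0, hr⟩).injective (Subtype.ext (congrFun (congrArg Subtype.val h) ⟨0, hr⟩))⟩
      invFun c := ⟨fun l ↦ ⟨fun t ↦ ⟨(c t).1 l, Fintype.mem_piFinset.1 (hS (c t)).1 l⟩,
        fun t t' h ↦ c.injective (hinj l _ _ (congrArg Subtype.val h))⟩, fun t ↦ (hS (c t)).2⟩
      left_inv _ := rfl
      right_inv _ := rfl }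
  rw [transversalCount, ← Fintype.card_coe S, ← Fintype.card_embedding_eq,
    ← Fintype.card_congr e, Fintype.card_subtype]

lemma card_transversals :
    Fintype.card (∀ l, κ ↪ U l) = ∏ l, (#(U l)).descFactorial (Fintype.card κ) := by
  simp only [Fintype.card_pi, Fintype.card_embedding_eq, Fintype.card_coe]

lemma isPartialMatching_image_univ {c : κ → Fin r → ℕ} {W : Finset ℕ}
    (hc : Injective (uncurry c)) (hW : ∀ t l, c t l ∈ W) :
    IsPartialMatching r W (univ.image fun t ↦ univ.image (c t)) where
  card_eq := by
    simp only [mem_image, mem_univ, true_and, forall_exists_index, forall_apply_eq_imp_iff]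
    exact fun t ↦ (card_image_of_injective _ (hc.comp (Prod.mk_right_injective t))).trans
      (card_fin r)
  disjoint := by
    simp only [mem_image, mem_univ, true_and, forall_exists_index, forall_apply_eq_imp_iff]
    intro t t' hne
    simp only [disjoint_left, mem_image, mem_univ, true_and, forall_exists_index,
      forall_apply_eq_imp_iff, not_exists]
    exact fun l m h ↦ hne (congrArg (fun t ↦ univ.image (c t))
      (congrArg Prod.fst (@hc (t', m) (t, l) h)).symm)
  subset := by
    simp only [mem_image, mem_univ, true_and, forall_exists_index, forall_apply_eq_imp_iff]
    exact fun t ↦ image_subset_iff.2 fun l _ ↦ hW t l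

lemma prob_forall_image_mem (hr : 0 < r) {c : κ → Fin r → ℕ}
    (hc : Injective (uncurry c)) (hW : ∀ t l, c t l ∈ Icc 1 (r * n)) :
    prob r n (fun M ↦ ∀ t, univ.image (c t) ∈ M) = inclusionProb r n (Fintype.card κ) := by
  have hinj : Injective fun t ↦ univ.image (c t) := by
    intro t t' (h : univ.image (c t) = univ.image (c t'))
    obtain ⟨m, -, hm⟩ := mem_image.1 (h ▸ mem_image_of_mem (c t) (mem_univ (⟨0, hr⟩ : Fin r)))
    exact (congrArg Prod.fst (@hc (t', m) (t, ⟨0, hr⟩) hm)).symm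
  have h := prob_subset_eq hr (isPartialMatching_image_univ hc hW)
  rw [card_image_of_injective _ hinj, card_univ] at h
  rw [← h]
  simp only [image_subset_iff, mem_univ, true_imp_iff]

lemma prob_forall_transversal_mem (hr : 0 < r) (hU : Pairwise (Disjoint on U))
    (hV : Pairwise (Disjoint on V)) (hUV : ∀ l m, Disjoint (U l) (V m))
    (hUn : ∀ l, U l ⊆ Icc 1 (r * n)) (hVn : ∀ l, V l ⊆ Icc 1 (r * n))
    (g : ∀ l, κ ↪ U l) (h : ∀ l, κ' ↪ V l) :
    prob r n (fun M ↦ (∀ t, univ.image (transversal g t) ∈ M) ∧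
      ∀ t, univ.image (transversal h t) ∈ M) =
        inclusionProb r n (Fintype.card κ + Fintype.card κ') := by
  set c : κ ⊕ κ' → Fin r → ℕ := Sum.elim (transversal g) (transversal h)
  have hne : ∀ t t' l m, transversal g t l ≠ transversal h t' m := fun t t' l m ↦
    disjoint_iff_ne.1 (hUV l m) _ (g l t).2 _ (h m t').2
  have hc : Injective (uncurry c) := by
    rintro ⟨t | t, l⟩ ⟨t' | t', m⟩ hlm
    · simpa using transversal_injective hU g (a₁ := (t, l)) (a₂ := (t', m)) hlm
    · exact absurd hlm (hne t t' l m)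
    · exact absurd hlm.symm (hne t' t m l)
    · simpa using transversal_injective hV h (a₁ := (t, l)) (a₂ := (t', m)) hlm
  have hmem : ∀ t l, c t l ∈ Icc 1 (r * n) := by
    rintro (t | t) l
    exacts [hUn l (g l t).2, hVn l (h l t).2]
  rw [← Fintype.card_sum, ← prob_forall_image_mem hr hc hmem]
  simp only [Sum.forall, c, Sum.elim_inl, Sum.elim_inr]

/-- Joint factorial moments count the pairs of ordered matchings in the two boxes. -/
lemma expect_descFactorial_mul (hr : 0 < r) (hU : Pairwise (Disjoint on U))
    (hV : Pairwise (Disjoint on V)) (hUV : ∀ l m, Disjoint (U l) (V m))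
    (hUn : ∀ l, U l ⊆ Icc 1 (r * n)) (hVn : ∀ l, V l ⊆ Icc 1 (r * n)) (i j : ℕ) :
    _root_.expect r n (fun M ↦ ((transversalCount U M).descFactorial i : ℝ) *
      (transversalCount V M).descFactorial j) =
        (∏ l, (#(U l)).descFactorial i) * (∏ l, (#(V l)).descFactorial j) *
          inclusionProb r n (i + j) := by
  calc _ = _root_.expect r n (fun M ↦ ∑ g : ∀ l, Fin i ↪ U l, ∑ h : ∀ l, Fin j ↪ V l,
        if (∀ t, univ.image (transversal g t) ∈ M) ∧ ∀ t, univ.image (transversal h t) ∈ M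
          then 1 else 0) := expect_congr fun M hM ↦ by
        have hM := isPartialMatching_of_mem_matchingFamilies hr hM
        have hi := card_transversals_subset (κ := Fin i) hr hM hU
        have hj := card_transversals_subset (κ := Fin j) hr hM hV
        rw [Fintype.card_fin] at hi hj
        simp only [← hi, ← hj, ite_and, ← sum_boole, sum_mul_sum, ite_zero_mul_ite_zero, mul_one]
    _ = ∑ _g : ∀ l, Fin i ↪ U l, ∑ _h : ∀ l, Fin j ↪ V l, inclusionProb r n (i + j) := by
        simp only [expect_sum]
        refine sum_congr rfl fun g _ ↦ sum_congr rfl fun h _ ↦ ?_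
        have hgh := prob_forall_transversal_mem hr hU hV hUV hUn hVn g h
        rw [prob_eq_expect, Fintype.card_fin, Fintype.card_fin] at hgh
        rw [← hgh]
        congr!
    _ = _ := by
        simp only [sum_const, card_univ, card_transversals, Fintype.card_fin, nsmul_eq_mul]
        push_cast
        ring

end Boxes

/-! ### Truncated inclusion–exclusion -/

section FallingPoly

open Function

variable {r n L : ℕ} {m m' : ℕ} {U V : Fin r → Finset ℕ}

/-- The polynomial with coefficients `a` in the basis of falling factorials. -/
def fallingPoly (a : Fin m → ℝ) (y : ℕ) : ℝ :=
  ∑ i, a i * y.descFactorial i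

/-- The coefficients of `y - y * (y - 1) / 2 - q`, the first two terms of inclusion–exclusion
for the indicator of `0 < y`, shifted by `q`. -/
noncomputable def bonferroniCoeff (q : ℝ) : Fin 3 → ℝ := ![-q, 1, -1 / 2]

/-- The coefficients of the square of the polynomial with coefficients `bonferroniCoeff q`. -/
noncomputable def bonferroniSqCoeff (q : ℝ) : Fin 5 → ℝ := ![q ^ 2, 1 - 2 * q, q - 1 / 2, 0, 1 / 4]

lemma fallingPoly_bonferroniCoeff (q : ℝ) (y : ℕ) :
    fallingPoly (bonferroniCoeff q) y = y - y * (y - 1) / 2 - q := by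
  simp only [fallingPoly, bonferroniCoeff, Fin.sum_univ_three, Matrix.cons_val, Fin.val_zero,
    Fin.val_one, Fin.val_two, Nat.descFactorial_zero, Nat.descFactorial_one,
    Nat.cast_descFactorial_two, Nat.cast_one]
  ring

lemma fallingPoly_bonferroniCoeff_le (q : ℝ) (y : ℕ) :
    fallingPoly (bonferroniCoeff q) y ≤ (if 0 < y then 1 else 0) - q := by
  rw [fallingPoly_bonferroniCoeff]
  rcases y with _ | y
  · simp only [lt_self_iff_false, if_false, Nat.cast_zero, zero_mul, zero_div, sub_zero, le_refl]
  · have h : (y : ℝ) ≤ y ^ 2 := by exact_mod_cast Nat.le_self_pow two_ne_zero y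
    rw [if_pos y.succ_pos]
    push_cast
    linarith

lemma fallingPoly_bonferroniCoeff_sq (q : ℝ) (y : ℕ) :
    fallingPoly (bonferroniCoeff q) y * fallingPoly (bonferroniCoeff q) y =
      fallingPoly (bonferroniSqCoeff q) y := by
  have h4 : (y.descFactorial 4 : ℝ) = y * (y - 1) * (y - 2) * (y - 3) := by
    rw [← descPochhammer_eval_eq_descFactorial]
    simp [descPochhammer_succ_eval]
  rw [fallingPoly_bonferroniCoeff]
  simp only [fallingPoly, bonferroniSqCoeff, Fin.sum_univ_five, Matrix.cons_val, Fin.val_zero,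
    Fin.val_one, Fin.val_two, Nat.descFactorial_zero, Nat.descFactorial_one,
    Nat.cast_descFactorial_two, Nat.cast_one, zero_mul, show ((4 : Fin 5) : ℕ) = 4 from rfl, h4]
  ring

/-- The joint factorial moment of orders `i` and `j` of the numbers of edges in two disjoint
boxes with sides of length `L`. -/
noncomputable def boxMoment (r n L i j : ℕ) : ℝ :=
  L.descFactorial i ^ r * L.descFactorial j ^ r * inclusionProb r n (i + j)

/-- The boxes `U x 0 × ⋯ × U x (r - 1)` have pairwise disjoint sides, all of length `L`
and contained in `{1, …, r * n}`. -/
structure IsBoxFamily {ι : Type*} (n L : ℕ) (U : ι → Fin r → Finset ℕ) : Prop where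
  disjoint : Pairwise (Disjoint on uncurry U)
  card_eq : ∀ x l, #(U x l) = L
  subset : ∀ x l, U x l ⊆ Icc 1 (r * n)

namespace IsBoxFamily

variable {ι : Type*} {U : ι → Fin r → Finset ℕ}

lemma pairwise_disjoint (hU : IsBoxFamily n L U) (x : ι) : Pairwise (Disjoint on U x) :=
  fun l m h ↦ hU.disjoint (i := (x, l)) (j := (x, m)) fun h' ↦ h (congrArg Prod.snd h')

lemma disjoint_of_ne (hU : IsBoxFamily n L U) {x y : ι} (hxy : x ≠ y) (l m : Fin r) :
    Disjoint (U x l) (U y m) :=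
  hU.disjoint (i := (x, l)) (j := (y, m)) fun h ↦ hxy (congrArg Prod.fst h)

lemma expect_fallingPoly_mul (hU : IsBoxFamily n L U) (hr : 0 < r) {x y : ι} (hxy : x ≠ y)
    (a : Fin m → ℝ) (b : Fin m' → ℝ) :
    _root_.expect r n (fun M ↦ fallingPoly a (transversalCount (U x) M) *
      fallingPoly b (transversalCount (U y) M)) =
        ∑ i, ∑ j, a i * b j * boxMoment r n L i j := by
  simp only [fallingPoly, sum_mul_sum, mul_mul_mul_comm, expect_sum, expect_const_mul]
  refine sum_congr rfl fun i _ ↦ sum_congr rfl fun j _ ↦ congrArg _ ?_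
  rw [expect_descFactorial_mul hr (hU.pairwise_disjoint x) (hU.pairwise_disjoint y)
    (hU.disjoint_of_ne hxy) (hU.subset x) (hU.subset y)]
  simp only [hU.card_eq, prod_const, card_fin, boxMoment]
  push_cast
  ring

lemma expect_fallingPoly (hU : IsBoxFamily n L U) (hr : 0 < r) (x : ι) (a : Fin m → ℝ) :
    _root_.expect r n (fun M ↦ fallingPoly a (transversalCount (U x) M)) =
      ∑ i, a i * boxMoment r n L i 0 := by
  simp only [fallingPoly, expect_sum, expect_const_mul]
  refine sum_congr rfl fun i _ ↦ congrArg _ ?_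
  have h := expect_descFactorial_mul (V := fun _ ↦ ∅) hr (hU.pairwise_disjoint x)
    (fun _ _ _ ↦ disjoint_empty_left _) (fun _ _ ↦ disjoint_empty_right _) (hU.subset x)
    (fun _ ↦ empty_subset _) i 0
  simpa only [Nat.descFactorial_zero, Nat.cast_one, mul_one, prod_const, prod_const_one, hU.card_eq,
    card_fin, boxMoment, one_pow, Nat.cast_pow] using h

end IsBoxFamily

end FallingPoly

/-! ### The lower bound -/

section LowerBound

open Function

variable {r n k L : ℕ} {P : Finset (Finset ℕ)} {Ps : Set (Finset (Finset ℕ))} {A B : Fin r ↪o ℕ}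

lemma lt_of_mem_Ioc_mul {p q u v : ℕ} (hpq : p < q) (hu : u ∈ Ioc (p * L) ((p + 1) * L))
    (hv : v ∈ Ioc (q * L) ((q + 1) * L)) : u < v :=
  calc u ≤ (p + 1) * L := (mem_Ioc.1 hu).2
    _ ≤ q * L := Nat.mul_le_mul_right L hpq
    _ < v := (mem_Ioc.1 hv).1

lemma isBoxFamily_Ioc {ι : Type*} {p : ι → Fin r → ℕ} (hp : Injective (uncurry p))
    (hlt : ∀ x l, p x l < r * k * r) (hkL : r * k * L ≤ n) :
    IsBoxFamily n L fun x l ↦ Ioc (p x l * L) ((p x l + 1) * L) where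
  disjoint i j hij := by
    refine disjoint_left.2 fun u hu hv ↦ ?_
    rcases (hp.ne hij).lt_or_gt with h | h
    · exact (lt_of_mem_Ioc_mul h hu hv).false
    · exact (lt_of_mem_Ioc_mul h hv hu).false
  card_eq x l := by rw [Nat.card_Ioc, Nat.succ_mul, Nat.add_sub_cancel_left]
  subset x l u hu := by
    obtain ⟨hlow, hupp⟩ := mem_Ioc.1 hu
    refine mem_Icc.2 ⟨by lia, hupp.trans ?_⟩
    calc (p x l + 1) * L ≤ r * k * r * L := Nat.mul_le_mul_right L (hlt x l)
      _ = r * (r * k * L) := by ring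
      _ ≤ r * n := Nat.mul_le_mul_left r hkL

lemma EnumeratesPattern.injective_uncurry {ι : Type*} [LinearOrder ι]
    (hP : EnumeratesPattern P A B) {p : ι → Fin r ↪o ℕ}
    (hp : ∀ x y, x < y → SameOrder (p x) (p y) A B) : Injective (uncurry fun x l ↦ p x l) := by
  rintro ⟨x, l⟩ ⟨y, m⟩ (h : p x l = p y m)
  rcases lt_trichotomy x y with hxy | rfl | hxy
  · exact absurd h (((hp x y hxy).ne_iff l m).2 (hP.ne l m))
  · rw [(p x).injective h]
  · exact absurd h.symm (((hp y x hxy).ne_iff m l).2 (hP.ne m l))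

lemma EnumeratesPattern.card_le_zClique (hP : EnumeratesPattern P A B) (hr : 0 < r) (hPs : P ∈ Ps)
    {p : Fin k → Fin r ↪o ℕ} (hp : ∀ x y, x < y → SameOrder (p x) (p y) A B)
    (M : Finset (Finset ℕ)) :
    #{x | 0 < transversalCount (fun l ↦ Ioc (p x l * L) ((p x l + 1) * L)) M} ≤
      zClique r Ps M := by
  set T : Finset (Fin k) :=
    {x | 0 < transversalCount (fun l ↦ Ioc (p x l * L) ((p x l + 1) * L)) M}
  have hedge : ∀ x, ∃ c : Fin r ↪o ℕ, x ∈ T →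
      (∀ l, c l ∈ Ioc (p x l * L) ((p x l + 1) * L)) ∧ univ.image c ∈ M := by
    intro x
    by_cases hx : x ∈ T
    · obtain ⟨v, hv⟩ := card_pos.1 ((mem_filter_univ x).1 hx)
      obtain ⟨hvU, hvM⟩ := mem_filter.1 hv
      rw [Fintype.mem_piFinset] at hvU
      exact ⟨.ofStrictMono v fun l m h ↦ lt_of_mem_Ioc_mul ((p x).strictMono h) (hvU l) (hvU m),
        fun _ ↦ ⟨hvU, hvM⟩⟩
    · exact ⟨p x, fun h ↦ absurd h hx⟩
  choose c hc using hedge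
  have horder : ∀ x ∈ T, ∀ y ∈ T, x < y → SameOrder (c x) (c y) A B := fun x hx y hy hxy ↦
    sameOrder_of_imp hP.ne fun l m ↦
      ⟨fun h ↦ lt_of_mem_Ioc_mul ((hp x y hxy l m).1.2 h) ((hc x hx).1 l) ((hc y hy).1 m),
        fun h ↦ lt_of_mem_Ioc_mul ((hp x y hxy l m).2.2 h) ((hc y hy).1 m) ((hc x hx).1 l)⟩
  rw [← hP.card_image hr horder]
  exact ((hP.isClique_image horder).mono_patterns (Set.singleton_subset_iff.2 hPs)).card_le_zClique
    (image_subset_iff.2 fun x hx ↦ (hc x hx).2)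

lemma Collectable.exists_isBoxFamily (hP : Collectable r P) (hr : 0 < r)
    (hP2 : IsOrderedMatching r 2 P) (hPs : P ∈ Ps) (hkL : r * k * L ≤ n) :
    ∃ U : Fin k → Fin r → Finset ℕ, IsBoxFamily n L U ∧
      ∀ M, #{x | 0 < transversalCount (U x) M} ≤ zClique r Ps M := by
  obtain ⟨A, B, hAB, -⟩ := exists_enumeratesPattern hr hP2
  obtain ⟨p, hlt, hp⟩ := ((hAB.collectable_iff hr).1 hP).exists_blowUp hAB.ne k
  exact ⟨_, isBoxFamily_Ioc (hAB.injective_uncurry hp) hlt hkL, hAB.card_le_zClique hr hPs hp⟩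

/-- The contributions of the boxes to the number of boxes that contain an edge are bounded below
by truncated inclusion–exclusion and are nearly uncorrelated, so Chebyshev's inequality applies. -/
lemma prob_zClique_le_sub_le (hP : Collectable r P) (hr : 0 < r) (hP2 : IsOrderedMatching r 2 P)
    (hPs : P ∈ Ps) (hkL : r * k * L ≤ n) {q t : ℝ} (ht : 0 < t) :
    prob r n (fun M ↦ (zClique r Ps M : ℝ) ≤ q * k - t) ≤
      (k * (k - 1) * (∑ i, ∑ j, bonferroniCoeff q i * bonferroniCoeff q j * boxMoment r n L i j) +
        k * ∑ i, bonferroniSqCoeff q i * boxMoment r n L i 0) / t ^ 2 := by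
  obtain ⟨U, hU, hz⟩ := hP.exists_isBoxFamily (k := k) hr hP2 hPs hkL
  have hsum : ∀ M, ∑ x, fallingPoly (bonferroniCoeff q) (transversalCount (U x) M) ≤
      zClique r Ps M - q * k := fun M ↦
    calc _ ≤ ∑ x, ((if 0 < transversalCount (U x) M then 1 else 0) - q) :=
          sum_le_sum fun x _ ↦ fallingPoly_bonferroniCoeff_le q _
      _ = #{x | 0 < transversalCount (U x) M} - q * k := by
          rw [sum_sub_distrib, sum_boole, sum_const, card_fin, nsmul_eq_mul, mul_comm q]
      _ ≤ zClique r Ps M - q * k := by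
          gcongr
          exact hz M
  have h := prob_le_abs_sum_le (T := univ) (r := r) (n := n) (t := t)
    (W := fun x M ↦ fallingPoly (bonferroniCoeff q) (transversalCount (U x) M))
    (fun x _ y _ hxy ↦ (hU.expect_fallingPoly_mul hr hxy _ _).le)
    (fun x _ ↦ by
      simp only [fallingPoly_bonferroniCoeff_sq]
      exact (hU.expect_fallingPoly hr x _).le) ht
  rw [card_fin] at h
  refine (prob_mono fun M _ hM ↦ ?_).trans h
  exact le_abs.2 (.inr (by linarith [hsum M]))

end LowerBound

section Asymptotics

open Filter Topology Asymptotics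

variable {r : ℕ} {P : Finset (Finset ℕ)} {Ps : Set (Finset (Finset ℕ))}

/-- The number of boxes, asymptotically `n ^ (1 / r)`. -/
noncomputable def boxCount (r n : ℕ) : ℕ := ⌊(n : ℝ) ^ (1 / r : ℝ)⌋₊

/-- The side length of the boxes, the largest one for which they fit into `{1, …, r * n}`. -/
noncomputable def boxSide (r n : ℕ) : ℕ := n / (r * boxCount r n)

/-- The limit of the expected number of edges in a box. -/
noncomputable def boxMean (r : ℕ) : ℝ := r.factorial / r ^ (2 * r)

lemma isEquivalent_boxCount (hr : 0 < r) :
    (fun n ↦ (boxCount r n : ℝ)) ~[atTop] fun n ↦ (n : ℝ) ^ (1 / r : ℝ) :=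
  isEquivalent_nat_floor.comp_tendsto (tendsto_natCast_rpow_one_div_atTop hr)

lemma tendsto_div_boxCount_atTop (hr : 2 ≤ r) :
    Tendsto (fun n : ℕ ↦ (n : ℝ) / (r * boxCount r n : ℕ)) atTop atTop := by
  have hr0 : 0 < r := by lia
  have hlim := tendsto_natCast_rpow_one_div_atTop hr0
  refine tendsto_atTop_mono' _ ?_ (hlim.atTop_div_const (Nat.cast_pos.2 hr0))
  filter_upwards [hlim.eventually_ge_atTop 1] with n hn
  set x := (n : ℝ) ^ (1 / r : ℝ)
  have hk : (boxCount r n : ℝ) ≤ x := Nat.floor_le (by positivity)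
  have hk0 : 0 < boxCount r n := Nat.floor_pos.2 hn
  have hx : x ^ 2 ≤ n := natCast_rpow_one_div_pow hr0 n ▸ pow_le_pow_right₀ hn hr
  push_cast
  rw [div_le_div_iff₀ (by positivity) (by positivity)]
  calc x * (r * boxCount r n) ≤ x * (r * x) := by gcongr
    _ = x ^ 2 * r := by ring
    _ ≤ n * r := by gcongr

lemma isEquivalent_boxSide (hr : 2 ≤ r) :
    (fun n ↦ (boxSide r n : ℝ)) ~[atTop] fun n ↦ (n : ℝ) / (r * boxCount r n : ℕ) := by
  simpa only [boxSide, Function.comp_def, Nat.floor_div_eq_div] using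
    isEquivalent_nat_floor.comp_tendsto (tendsto_div_boxCount_atTop hr)

lemma tendsto_boxSide_atTop (hr : 2 ≤ r) : Tendsto (boxSide r) atTop atTop :=
  tendsto_natCast_atTop_iff.1
    ((isEquivalent_boxSide hr).symm.tendsto_atTop (tendsto_div_boxCount_atTop hr))

lemma isEquivalent_boxSide_pow (hr : 2 ≤ r) :
    (fun n ↦ (boxSide r n : ℝ) ^ r) ~[atTop] fun n ↦ (n : ℝ) ^ r / (r ^ r * n) := by
  have hr0 : 0 < r := by lia
  have hcount : (fun n ↦ (boxCount r n : ℝ) ^ r) ~[atTop] fun n ↦ (n : ℝ) := by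
    simpa only [Pi.pow_def, natCast_rpow_one_div_pow hr0] using
      (isEquivalent_boxCount hr0).pow r
  have hside := (isEquivalent_boxSide hr).pow r
  simp only [Pi.pow_def, div_pow, Nat.cast_mul, mul_pow] at hside
  exact hside.trans (.div .refl (.mul .refl hcount))

lemma isEquivalent_inclusionProb (hr : 0 < r) (s : ℕ) :
    (fun n ↦ inclusionProb r n s) ~[atTop]
      fun n ↦ (r.factorial : ℝ) ^ s * n ^ s / (r * n) ^ (r * s) := by
  have hmul : Tendsto (fun n ↦ r * n) atTop atTop := tendsto_id.const_mul_atTop' hr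
  have hdesc : (fun n ↦ ((r * n).descFactorial (r * s) : ℝ)) ~[atTop]
      fun n ↦ ((r : ℝ) * n) ^ (r * s) := by
    simpa only [Function.comp_def, Nat.cast_mul] using
      (isEquivalent_descFactorial (r * s)).comp_tendsto hmul
  refine IsEquivalent.congr_left ((IsEquivalent.refl.mul (isEquivalent_descFactorial s)).div hdesc)
    ?_
  filter_upwards [eventually_ge_atTop s] with n hn using (inclusionProb_eq hr hn).symm

lemma tendsto_boxMoment (hr : 2 ≤ r) (i j : ℕ) :
    Tendsto (fun n ↦ boxMoment r n (boxSide r n) i j) atTop (𝓝 (boxMean r ^ (i + j))) := by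
  have hdesc : ∀ i, (fun n ↦ ((boxSide r n).descFactorial i : ℝ) ^ r) ~[atTop]
      fun n ↦ ((n : ℝ) ^ r / (r ^ r * n)) ^ i := fun i ↦ by
    have h := ((isEquivalent_descFactorial i).comp_tendsto (tendsto_boxSide_atTop hr)).pow r
    simp only [Pi.pow_def, Function.comp_def, pow_right_comm _ i r] at h
    exact h.trans ((isEquivalent_boxSide_pow hr).pow i)
  have hlim : (fun n ↦ boxMoment r n (boxSide r n) i j) ~[atTop]
      fun _ ↦ boxMean r ^ (i + j) := by
    refine (((hdesc i).mul (hdesc j)).mul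
      (isEquivalent_inclusionProb (by lia) (i + j))).congr_right ?_
    filter_upwards [eventually_gt_atTop 0] with n hn
    have : (0 : ℝ) < n := Nat.cast_pos.2 hn
    have : (0 : ℝ) < r := Nat.cast_pos.2 (by lia)
    simp only [Pi.mul_apply]
    rw [← pow_add, pow_mul, ← mul_pow, ← div_pow, ← mul_pow, boxMean]
    congr 1
    rw [mul_pow, two_mul, pow_add]
    field_simp
  exact hlim.symm.tendsto_nhds tendsto_const_nhds

lemma boxMean_pos (hr : 0 < r) : 0 < boxMean r := by
  unfold boxMean
  positivity

lemma boxMean_le_one (hr : 0 < r) : boxMean r ≤ 1 := by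
  refine div_le_one_of_le₀ ?_ (by positivity)
  exact_mod_cast r.factorial_le_pow.trans (Nat.pow_le_pow_right hr (by lia))

lemma tendsto_sum_bonferroniCoeff_mul_boxMoment (hr : 2 ≤ r) {q : ℝ}
    (hq : q = boxMean r - boxMean r ^ 2 / 2) :
    Tendsto (fun n ↦ ∑ i, ∑ j, bonferroniCoeff q i * bonferroniCoeff q j *
      boxMoment r n (boxSide r n) i j) atTop (𝓝 0) := by
  have hlim := tendsto_finsetSum univ fun (i : Fin 3) _ ↦ tendsto_finsetSum univ fun (j : Fin 3) _ ↦
    (tendsto_boxMoment hr i j).const_mul (bonferroniCoeff q i * bonferroniCoeff q j)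
  have hzero : ∑ i, bonferroniCoeff q i * boxMean r ^ (i : ℕ) = 0 := by
    simp only [bonferroniCoeff, Fin.sum_univ_three, Matrix.cons_val, Fin.val_zero, Fin.val_one,
      Fin.val_two, hq]
    ring
  simpa only [pow_add, mul_mul_mul_comm _ (bonferroniCoeff _ _), ← sum_mul_sum, hzero, zero_mul]
    using hlim

lemma tendsto_secondMoment_div {a b k : ℕ → ℝ} {q B : ℝ} (ha : Tendsto a atTop (𝓝 0))
    (hb : Tendsto b atTop (𝓝 B)) (hk : Tendsto k atTop atTop) (hq : q ≠ 0) :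
    Tendsto (fun n ↦ (k n * (k n - 1) * a n + k n * b n) / (q * k n / 2) ^ 2) atTop (𝓝 0) := by
  have hinv := tendsto_inv_atTop_zero.comp hk
  have hlim : Tendsto (fun n ↦ 4 / q ^ 2 * ((1 - (k n)⁻¹) * a n + (k n)⁻¹ * b n)) atTop
      (𝓝 (4 / q ^ 2 * ((1 - 0) * 0 + 0 * B))) :=
    (((hinv.const_sub 1).mul ha).add (hinv.mul hb)).const_mul _
  rw [mul_zero, zero_mul, add_zero, mul_zero] at hlim
  refine hlim.congr' ?_
  filter_upwards [hk.eventually_gt_atTop 0] with n hn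
  field_simp
  ring

theorem Collectable.exists_aas_le_zClique (hP : Collectable r P) (hr : 2 ≤ r)
    (hP2 : IsOrderedMatching r 2 P) (hPs : P ∈ Ps) :
    ∃ c : ℝ, 0 < c ∧ AAS r fun n M ↦ c * (n : ℝ) ^ (1 / r : ℝ) ≤ zClique r Ps M := by
  have hr0 : 0 < r := by lia
  set q := boxMean r - boxMean r ^ 2 / 2 with hq
  have hq0 : 0 < q := by nlinarith [boxMean_pos hr0, boxMean_le_one hr0]
  have hx := tendsto_natCast_rpow_one_div_atTop hr0
  have hk : Tendsto (fun n ↦ (boxCount r n : ℝ)) atTop atTop :=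
    (isEquivalent_boxCount hr0).symm.tendsto_atTop hx
  have hb := tendsto_finsetSum univ fun (i : Fin 5) _ ↦
    (tendsto_boxMoment hr i 0).const_mul (bonferroniSqCoeff q i)
  refine ⟨q / 4, by positivity, aas_of_prob_not_le hr0 (tendsto_secondMoment_div
    (tendsto_sum_bonferroniCoeff_mul_boxMoment hr hq) hb hk hq0.ne') ?_⟩
  filter_upwards [hx.eventually_ge_atTop 2, hk.eventually_gt_atTop 0] with n hn hkn
  have hkL : r * boxCount r n * boxSide r n ≤ n := Nat.mul_div_le _ _
  have hfloor : (n : ℝ) ^ (1 / r : ℝ) < boxCount r n + 1 := Nat.lt_floor_add_one _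
  refine (prob_mono fun M _ hM ↦ ?_).trans
    (prob_zClique_le_sub_le hP hr0 hP2 hPs hkL (q := q) (t := q * boxCount r n / 2) (by positivity))
  nlinarith [not_le.1 hM]

end Asymptotics

/-- **Theorem (mismatched pairs).** For every `r ≥ 2` and every mismatched pair `{P, Q}` of
distinct `r`-patterns, a.a.s. `z_{{P,Q}}(RM_n^(r)) = Θ(n^(1/r))`. -/
theorem aas_mismatched_pair (r : ℕ) (hr : 2 ≤ r) (P Q : Finset (Finset ℕ))
    (hP : IsOrderedMatching r 2 P) (hQ : IsOrderedMatching r 2 Q)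
    (hPQ : Mismatch r P Q) :
    ∃ c₁ c₂ : ℝ, 0 < c₁ ∧ 0 < c₂ ∧
      Filter.Tendsto
        (fun n : ℕ => prob r n (fun M =>
          c₁ * (n : ℝ) ^ ((1 : ℝ) / (r : ℝ)) ≤ (zClique r {P, Q} M : ℝ) ∧
          (zClique r {P, Q} M : ℝ) ≤ c₂ * (n : ℝ) ^ ((1 : ℝ) / (r : ℝ))))
        Filter.atTop (nhds 1) := by
  have hr0 : 0 < r := by lia
  obtain ⟨c₂, hc₂, hupper⟩ := hPQ.exists_aas_zClique_le hr hP hQ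
  obtain ⟨c₁, hc₁, hlower⟩ : ∃ c : ℝ, 0 < c ∧
      AAS r fun n M ↦ c * (n : ℝ) ^ (1 / r : ℝ) ≤ zClique r {P, Q} M := by
    rcases hPQ.2 with ⟨hPcoll, -⟩ | ⟨-, hQcoll⟩ | ⟨hPcoll, -, -⟩
    · exact hPcoll.exists_aas_le_zClique hr hP (Set.mem_insert P {Q})
    · exact hQcoll.exists_aas_le_zClique hr hQ (Set.mem_insert_of_mem P rfl)
    · exact hPcoll.exists_aas_le_zClique hr hP (Set.mem_insert P {Q})
  exact ⟨c₁, c₂, hc₁, hc₂, hlower.and hr0 hupper⟩
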